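/- arXiv:1104.5007 — 2 statements merged into one kernel-verified Lean document; each statement's English description precedes it below -/
import Mathlib

section
/- For every ε > 0 there exists n₀ such that for every integer n ≥ n₀, the maximum size r₃(n) of a family of n-permutations with VC-dimension at most 3 satisfies r₃(n) ≤ α(n)^{(4+ε)·n}. -/
/-! ## Inverse Ackermann hierarchy -/

/-- Bounded-fuel iteration counter: number of applications of `f` needed to bring `m`
down to a value `≤ 1` (assuming `f` strictly decreases on values `≥ 2`). -/
def iterCount (f : ℕ → ℕ) : ℕ → ℕ → ℕ
  | 0, _ => 0
  | fuel + 1, m => if m ≤ 1 then 0 else 1 + iterCount f fuel (f m)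

/-- The inverse Ackermann hierarchy: `alphaHier 1 m = ⌈m/2⌉`, `alphaHier d 1 = 0` for `d ≥ 2`,
and `alphaHier d m = 1 + alphaHier d (alphaHier (d-1) m)` for `m, d ≥ 2`. -/
def alphaHier : ℕ → ℕ → ℕ
  | 0, m => m
  | 1, m => (m + 1) / 2
  | d + 2, m => iterCount (alphaHier (d + 1)) m m

/-- The inverse Ackermann function `α(m) = min {k ≥ 1 : α_k(m) ≤ 3}`. -/
noncomputable def invAck (m : ℕ) : ℕ := sInf {k : ℕ | 1 ≤ k ∧ alphaHier k m ≤ 3}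

/-! ## Permutations, restrictions, VC-dimension -/

/-- The restriction of the `n`-permutation `π` to the (increasing) `k`-tuple of positions `a`
is the `k`-permutation `σ`. -/
def PermRestrictionIs {n k : ℕ} (π : Equiv.Perm (Fin n)) (a : Fin k → Fin n)
    (σ : Equiv.Perm (Fin k)) : Prop :=
  ∀ i j : Fin k, σ i < σ j ↔ π (a i) < π (a j)

/-- The `k`-tuple of positions `a` is shattered by the family `P` of `n`-permutations. -/
def Shatters {n k : ℕ} (P : Finset (Equiv.Perm (Fin n))) (a : Fin k → Fin n) : Prop :=
  StrictMono a ∧ ∀ σ : Equiv.Perm (Fin k), ∃ π ∈ P, PermRestrictionIs π a σ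

/-- The family `P` of `n`-permutations has VC-dimension at most `k`:
no `(k+1)`-tuple of positions is shattered by `P`. -/
def VCDimLE (n k : ℕ) (P : Finset (Equiv.Perm (Fin n))) : Prop :=
  ∀ a : Fin (k + 1) → Fin n, ¬ Shatters P a

/-- The number of `1`-entries of the union of the permutation matrices of a family `P`
of `n`-permutations. -/
noncomputable def permOnes {n : ℕ} (P : Finset (Equiv.Perm (Fin n))) : ℕ :=
  Nat.card {p : Fin n × Fin n // ∃ π ∈ P, π p.2 = p.1}

/-- `v(P) = |M_P| / n`, the average number of `1`-entries per column of the union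
of the permutation matrices of the family `P`. -/
noncomputable def vPerm {n : ℕ} (P : Finset (Equiv.Perm (Fin n))) : ℝ :=
  (permOnes P : ℝ) / (n : ℝ)

/-! ## (0,1)-matrices -/

/-- The number of `1`-entries of a `(0,1)`-matrix (represented as a `Bool` matrix). -/
noncomputable def matOnes {m n : ℕ} (M : Fin m → Fin n → Bool) : ℕ :=
  Nat.card {p : Fin m × Fin n // M p.1 p.2 = true}

/-- The number of `1`-entries in column `j` of a `(0,1)`-matrix. -/
noncomputable def colOnes {m n : ℕ} (M : Fin m → Fin n → Bool) (j : Fin n) : ℕ :=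
  Nat.card {i : Fin m // M i j = true}

/-- The matrix `B` contains the matrix `S`. -/
def MatContains {m n p q : ℕ} (B : Fin m → Fin n → Bool) (S : Fin p → Fin q → Bool) : Prop :=
  ∃ (r : Fin p → Fin m) (c : Fin q → Fin n), StrictMono r ∧ StrictMono c ∧
    ∀ a b, S a b = true → B (r a) (c b) = true

/-- The `s × 2` matrix `DS_s`, with a `1`-entry in (1-indexed) row `i` and column `j`
exactly when `i + j` is odd. -/
def DS (s : ℕ) : Fin s → Fin 2 → Bool :=
  fun i j => decide ((i.val + j.val) % 2 = 1)

/-- The maximum number of `1`-entries in an `n × n` matrix avoiding `S`. -/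
noncomputable def exMat {p q : ℕ} (S : Fin p → Fin q → Bool) (n : ℕ) : ℕ :=
  sSup {x : ℕ | ∃ M : Fin n → Fin n → Bool, ¬ MatContains M S ∧ matOnes M = x}

/-- An `n × n` matrix is `k`-full if some increasing `k`-tuple of columns contains
every `k`-permutation matrix. -/
def IsFull (k : ℕ) {n : ℕ} (M : Fin n → Fin n → Bool) : Prop :=
  ∃ c : Fin k → Fin n, StrictMono c ∧ ∀ σ : Equiv.Perm (Fin k),
    ∃ r : Fin k → Fin n, StrictMono r ∧ ∀ b : Fin k, M (r (σ b)) (c b) = true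

/-- `pFull k n` is the maximum number of `1`-entries in an `n × n` matrix that is
not `(k+1)`-full. -/
noncomputable def pFull (k n : ℕ) : ℕ :=
  sSup {x : ℕ | ∃ M : Fin n → Fin n → Bool, ¬ IsFull (k + 1) M ∧ matOnes M = x}

/-! ## Formations -/

/-- `M` contains a `B`-fat `(r,s)`-formation: there are an `s`-partition of the rows into
intervals (the fibers of a monotone map `g`) and `r` columns, each having at least `B`
`1`-entries in every interval. -/
def FatFormation (B r s : ℕ) {m n : ℕ} (M : Fin m → Fin n → Bool) : Prop :=
  ∃ g : Fin m → Fin s, Monotone g ∧ ∃ c : Fin r → Fin n, StrictMono c ∧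
    ∀ (j : Fin r) (i : Fin s), B ≤ Nat.card {x : Fin m // g x = i ∧ M x (c j) = true}

/-- `M` contains a doubled `(r,s)`-formation: there are an `s`-partition of the rows into
intervals and `r` columns, each having at least one `1`-entry in the first and last
interval and at least two `1`-entries in every other interval. -/
def DoubledFormation (r s : ℕ) {m n : ℕ} (M : Fin m → Fin n → Bool) : Prop :=
  ∃ g : Fin m → Fin s, Monotone g ∧ ∃ c : Fin r → Fin n, StrictMono c ∧
    ∀ (j : Fin r) (i : Fin s),
      1 ≤ Nat.card {x : Fin m // g x = i ∧ M x (c j) = true} ∧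
      (i.val ≠ 0 → i.val ≠ s - 1 → 2 ≤ Nat.card {x : Fin m // g x = i ∧ M x (c j) = true})

/-! ## The functions R, D, β -/

/-- Nivasch's hierarchy `R_s(d)` (shifted as in the paper). -/
def Rfun : ℕ → ℕ → ℕ
  | 0, _ => 0
  | 1, _ => 0
  | 2, _ => 2
  | 3, _ => 3
  | 4, d => 2 * d + 1
  | _ + 5, 0 => 0
  | _ + 5, 1 => 0
  | s + 5, 2 => 2 ^ (s + 3) + 1
  | s + 5, d + 3 =>
      2 * (Rfun (s + 4) (d + 3) - 1) + (Rfun (s + 3) (d + 3) - 1) * (Rfun (s + 5) (d + 2) - 3) + 1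
  termination_by s d => (s, d)

/-- The hierarchy `D_s(d)`. -/
def Dfun : ℕ → ℕ → ℕ
  | 0, _ => 0
  | 1, _ => 0
  | 2, _ => 2
  | _ + 3, 0 => 0
  | _ + 3, 1 => 0
  | s + 3, 2 => 2 ^ (s + 2) + 2 ^ (s + 1) - 1
  | s + 3, d + 3 =>
      2 * Dfun (s + 2) (d + 3) + (Dfun (s + 1) (d + 3) + 1) * (Rfun (s + 3) (d + 2) - 3)
        + Dfun (s + 3) (d + 2) - Rfun (s + 3) (d + 2) + 1
  termination_by s d => (s, d)

/-- `β_s(m) = D_s(α(m))`. -/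
noncomputable def betaFun (s m : ℕ) : ℕ := Dfun s (invAck m)

/-! ## Sequences: MST and formations in sequences -/

/-- The list of column indices of the `1`-entries of a row, in increasing order. -/
def rowList {n : ℕ} (row : Fin n → Bool) : List (Fin n) :=
  (List.finRange n).filter (fun j => row j)

/-- The matrix → sequence transformation: read the rows top to bottom, writing for each
`1`-entry the index of its column. -/
def MST {m n : ℕ} (M : Fin m → Fin n → Bool) : List (Fin n) :=
  ((List.finRange m).map (fun i => rowList (M i))).flatten

/-- The list `L` contains an `(r,s)`-formation as a subsequence: a concatenation of `s`
permutations of the same `r`-element set of symbols is a sublist of `L`. -/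
def IsFormationSeq {A : Type*} [DecidableEq A] (r s : ℕ) (L : List A) : Prop :=
  ∃ (T : Finset A) (F : List (List A)), T.card = r ∧ F.length = s ∧
    (∀ l ∈ F, l.Nodup ∧ l.toFinset = T) ∧ List.Sublist F.flatten L

/-! A family of permutations is treated as a family `P` of functions `ι → ℕ`, so that it can be
restricted to a set of positions and its values can be contracted, with `n = #ι`.

An iterated shifting argument turns `P` into at least `#P / D ^ n` matrices whose columns are empty
or have exactly `D` entries, such that any choice of one entry from each nonempty column extends to
a function of `P`. As `P` shatters no four positions, such a matrix contains no `(4, 4)`-formation,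
and then `#B` nonempty columns in `m` rows carry at most `8k²·#B + 18k·m·α_k(m)` entries. Let
`k = α(n)` and `D = 16k²`, and first contract the values in groups of `k²`, so that `m` is about
`n / k²`. The bound then gives `#B = O(n / k³)`.

A matrix with nonempty columns `B` is determined by `D` functions of `P` restricted to `B`, so by
induction there are at most `(e ^ m * K ^ #B) ^ D = (O(1) * K ^ O(1 / k)) ^ n` of them for each `B`.
Altogether `#P ≤ (O(k⁴) * K ^ O(1 / k)) ^ n`, which is at most `K ^ n` for `K = k ^ (4 + ε)`. -/

section IterCount

variable {f : ℕ → ℕ} {m : ℕ}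

lemma iterCount_self_of_le_one (f : ℕ → ℕ) (hm : m ≤ 1) : iterCount f m m = 0 := by
  cases m <;> simp [iterCount, hm]

lemma iterCount_eq_of_le_of_le (hf : ∀ m, 2 ≤ m → f m < m) {a b : ℕ} (ha : m ≤ a) (hb : m ≤ b) :
    iterCount f a m = iterCount f b m := by
  induction m using Nat.strong_induction_on generalizing a b with
  | _ m ih =>
    by_cases hm : m ≤ 1
    · cases a <;> cases b <;> simp [iterCount, hm]
    · obtain ⟨a, rfl⟩ := Nat.exists_eq_succ_of_ne_zero (n := a) (by omega)
      obtain ⟨b, rfl⟩ := Nat.exists_eq_succ_of_ne_zero (n := b) (by omega)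
      have hfm := hf m (by omega)
      simp only [iterCount, hm, if_false]
      exact congrArg (1 + ·) (ih (f m) hfm (by omega) (by omega))

lemma iterCount_self_eq_one_add (hf : ∀ m, 2 ≤ m → f m < m) (hm : 2 ≤ m) :
    iterCount f m m = 1 + iterCount f (f m) (f m) := by
  have hfm := hf m hm
  calc iterCount f m m = iterCount f (m - 1 + 1) m := by rw [Nat.sub_add_cancel (by omega)]
    _ = 1 + iterCount f (m - 1) (f m) := if_neg (by omega)
    _ = 1 + iterCount f (f m) (f m) := by
      rw [iterCount_eq_of_le_of_le hf (by omega : f m ≤ m - 1) le_rfl]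

lemma iterCount_self_lt (hf : ∀ m, 2 ≤ m → f m < m) (hm : 2 ≤ m) : iterCount f m m < m := by
  induction m using Nat.strong_induction_on with
  | _ m ih =>
    have hfm := hf m hm
    rw [iterCount_self_eq_one_add hf hm]
    by_cases h : f m ≤ 1
    · rw [iterCount_self_of_le_one f h]; omega
    · have := ih (f m) hfm (by omega)
      omega

lemma iterCount_self_le (hf : ∀ m, 2 ≤ m → f m < m) (hm : 2 ≤ m) (hfm : 0 < f m) :
    iterCount f m m ≤ f m := by
  rw [iterCount_self_eq_one_add hf hm]
  by_cases h : f m ≤ 1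
  · rw [iterCount_self_of_le_one f h]; omega
  · have := iterCount_self_lt hf (by omega : 2 ≤ f m)
    omega

lemma monotone_iterCount_self (hf : ∀ m, 2 ≤ m → f m < m) (hmono : Monotone f) :
    Monotone fun m ↦ iterCount f m m := by
  intro m m' hm
  induction m' using Nat.strong_induction_on generalizing m with
  | _ m' ih =>
    by_cases h : m ≤ 1
    · simp only [iterCount_self_of_le_one f h, Nat.zero_le]
    · simp only [iterCount_self_eq_one_add hf (by omega : 2 ≤ m),
        iterCount_self_eq_one_add hf (by omega : 2 ≤ m')]
      exact Nat.add_le_add_left (ih (f m') (hf m' (by omega)) (hmono hm)) 1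

end IterCount

section InverseAckermann

open Filter

variable {d m : ℕ}

lemma alphaHier_succ_of_pos (hd : 1 ≤ d) (m : ℕ) :
    alphaHier (d + 1) m = iterCount (alphaHier d) m m := by
  obtain ⟨d, rfl⟩ := Nat.exists_eq_add_of_le' hd
  rfl

lemma alphaHier_lt_self (hd : 1 ≤ d) (hm : 2 ≤ m) : alphaHier d m < m := by
  induction d, hd using Nat.le_induction generalizing m with
  | base => simp only [alphaHier]; omega
  | succ d hd ih =>
    rw [alphaHier_succ_of_pos hd]
    exact iterCount_self_lt (fun _ ↦ ih) hm

lemma alphaHier_succ_eq_one_add (hd : 1 ≤ d) (hm : 2 ≤ m) :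
    alphaHier (d + 1) m = 1 + alphaHier (d + 1) (alphaHier d m) := by
  simp only [alphaHier_succ_of_pos hd]
  exact iterCount_self_eq_one_add (fun _ ↦ alphaHier_lt_self hd) hm

lemma alphaHier_succ_of_le_one (hd : 1 ≤ d) (hm : m ≤ 1) : alphaHier (d + 1) m = 0 := by
  rw [alphaHier_succ_of_pos hd, iterCount_self_of_le_one _ hm]

lemma alphaHier_pos (d : ℕ) (hm : 2 ≤ m) : 0 < alphaHier d m := by
  match d with
  | 0 | 1 => simp only [alphaHier]; omega
  | d + 2 => rw [alphaHier_succ_eq_one_add (by omega) hm]; omega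

lemma monotone_alphaHier (d : ℕ) : Monotone (alphaHier d) := by
  match d with
  | 0 => exact fun _ _ h ↦ h
  | 1 => exact fun m m' h ↦ by simp only [alphaHier]; omega
  | d + 2 =>
    exact monotone_iterCount_self (fun _ ↦ alphaHier_lt_self (Nat.le_add_left 1 d))
      (monotone_alphaHier (d + 1))

lemma antitone_alphaHier (m : ℕ) : Antitone fun d ↦ alphaHier d m := by
  refine antitone_nat_of_succ_le fun d ↦ ?_
  rcases Nat.eq_zero_or_pos d with rfl | hd
  · simp only [alphaHier]; omega
  by_cases hm : m ≤ 1
  · rw [alphaHier_succ_of_le_one hd hm]; exact Nat.zero_le _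
  · rw [alphaHier_succ_of_pos hd]
    exact iterCount_self_le (fun _ ↦ alphaHier_lt_self hd) (by omega)
      (alphaHier_pos d (by omega))

lemma alphaHier_two_eq_clog (m : ℕ) : alphaHier 2 m = Nat.clog 2 m := by
  induction m using Nat.strong_induction_on with
  | _ m ih =>
    by_cases hm : m ≤ 1
    · rw [alphaHier_succ_of_le_one le_rfl hm, Nat.clog_of_right_le_one hm]
    · rw [alphaHier_succ_eq_one_add le_rfl (by omega), Nat.clog_of_two_le (by omega) (by omega),
        ih _ (alphaHier_lt_self le_rfl (by omega)), add_comm]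
      rfl

lemma sq_le_two_pow_add_one (a : ℕ) : a ^ 2 ≤ 2 ^ a + 1 := by
  rcases lt_or_ge a 4 with ha | ha
  · interval_cases a <;> norm_num
  · induction a, ha using Nat.le_induction with
    | base => norm_num
    | succ a ha ih => rw [pow_succ 2]; nlinarith

lemma alphaHier_sq_le (hd : 2 ≤ d) (m : ℕ) : alphaHier d m ^ 2 ≤ 2 * m := by
  have hle : alphaHier d m ≤ alphaHier 2 m := antitone_alphaHier m hd
  refine (Nat.pow_le_pow_left hle 2).trans ?_
  rw [alphaHier_two_eq_clog]
  by_cases hm : m ≤ 1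
  · simp [Nat.clog_of_right_le_one hm]
  · have hclog := Nat.clog_pos (b := 2) (n := m) (by omega) (by omega)
    have hpow : 2 ^ (Nat.clog 2 m - 1) < m := Nat.pow_pred_clog_lt_self (by omega) (by omega)
    have hdouble : 2 ^ Nat.clog 2 m = 2 * 2 ^ (Nat.clog 2 m - 1) := by
      rw [← pow_succ', Nat.sub_add_cancel hclog]
    have hsq := sq_le_two_pow_add_one (Nat.clog 2 m)
    omega

lemma alphaHier_succ_lt (hd : 1 ≤ d) (h : 4 ≤ alphaHier d m) :
    alphaHier (d + 1) m < alphaHier d m := by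
  have hm : 2 ≤ m := by
    by_contra hm
    have hle : alphaHier d m ≤ alphaHier 1 m := antitone_alphaHier m hd
    simp only [alphaHier] at hle
    omega
  have hle : alphaHier (d + 1) (alphaHier d m) ≤ alphaHier 1 (alphaHier d m) :=
    antitone_alphaHier _ (by omega)
  rw [alphaHier_succ_eq_one_add hd hm]
  simp only [alphaHier] at hle
  omega

lemma exists_alphaHier_le_three (m : ℕ) : ∃ k, 1 ≤ k ∧ alphaHier k m ≤ 3 := by
  obtain ⟨k, hk⟩ := WellFounded.not_rel_apply_succ (r := (· < ·)) fun k ↦ alphaHier (k + 1) m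
  refine ⟨k + 1, by omega, ?_⟩
  by_contra h
  exact hk (alphaHier_succ_lt (by omega) (by omega))

lemma tendsto_alphaHier (d : ℕ) : Tendsto (alphaHier d) atTop atTop := by
  refine tendsto_atTop_atTop_of_monotone (monotone_alphaHier d) ?_
  induction d with
  | zero => exact fun K ↦ ⟨K, le_rfl⟩
  | succ d ihd =>
    intro K
    rcases Nat.eq_zero_or_pos d with rfl | hd
    · exact ⟨2 * K, by simp only [alphaHier]; omega⟩
    induction K with
    | zero => exact ⟨0, Nat.zero_le _⟩
    | succ K ihK =>
      obtain ⟨y, hy⟩ := ihK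
      obtain ⟨m, hm⟩ := ihd y
      refine ⟨max m 2, ?_⟩
      have hmax := monotone_alphaHier d (le_max_left m 2)
      rw [alphaHier_succ_eq_one_add hd (le_max_right m 2), add_comm K]
      exact Nat.add_le_add_left (hy.trans (monotone_alphaHier _ (hm.trans hmax))) 1

lemma alphaHier_invAck_le_three (m : ℕ) : alphaHier (invAck m) m ≤ 3 :=
  (Nat.sInf_mem (s := {k : ℕ | 1 ≤ k ∧ alphaHier k m ≤ 3}) (exists_alphaHier_le_three m)).2

lemma tendsto_invAck : Tendsto invAck atTop atTop := by
  refine tendsto_atTop.2 fun K ↦ ?_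
  filter_upwards [(tendsto_alphaHier K).eventually_ge_atTop 4] with m hm
  by_contra! h
  have hle : alphaHier K m ≤ alphaHier (invAck m) m := antitone_alphaHier m h.le
  have := alphaHier_invAck_le_three m
  omega

end InverseAckermann

section SplitRows

open scoped Finset

variable {R : Type*} {s : ℕ} {g : R → R → Fin s} {X : Finset R} {r : R}

/-- Given a choice of a partition `g r` of the rows into `s` intervals for each row `r`, the rows
`r ∈ X` whose partition has an element of `X` in every interval. -/
noncomputable def splitRows (g : R → R → Fin s) (X : Finset R) : Finset R :=
  open Classical in {r ∈ X | Set.SurjOn (g r) X Set.univ}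

lemma mem_splitRows :
    r ∈ splitRows g X ↔ r ∈ X ∧ Set.SurjOn (g r) X Set.univ := by
  classical exact Finset.mem_filter

lemma splitRows_subset (g : R → R → Fin s) (X : Finset R) : splitRows g X ⊆ X :=
  fun _ hr ↦ (mem_splitRows.1 hr).1

/-- The partition of the rows into four intervals cut out by lower sets `a ⊆ b ⊆ c`. -/
noncomputable def fourCut (a b c : Set R) (r : R) : Fin 4 :=
  open Classical in if r ∈ a then 0 else if r ∈ b then 1 else if r ∈ c then 2 else 3

lemma surjOn_fourCut {a b c : Set R} (hab : a ⊆ b) (hbc : b ⊆ c)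
    (h₀ : ∃ r ∈ X, r ∈ a) (h₁ : ∃ r ∈ X, r ∉ a ∧ r ∈ b) (h₂ : ∃ r ∈ X, r ∉ b ∧ r ∈ c)
    (h₃ : ∃ r ∈ X, r ∉ c) : Set.SurjOn (fourCut a b c) X Set.univ := by
  obtain ⟨r₀, hr₀, ha₀⟩ := h₀
  obtain ⟨r₁, hr₁, ha₁, hb₁⟩ := h₁
  obtain ⟨r₂, hr₂, hb₂, hc₂⟩ := h₂
  obtain ⟨r₃, hr₃, hc₃⟩ := h₃
  have ha₂ : r₂ ∉ a := fun h ↦ hb₂ (hab h)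
  have hb₃ : r₃ ∉ b := fun h ↦ hc₃ (hbc h)
  have ha₃ : r₃ ∉ a := fun h ↦ hb₃ (hab h)
  intro i _
  fin_cases i
  · exact ⟨r₀, hr₀, by simp [fourCut, ha₀]⟩
  · exact ⟨r₁, hr₁, by simp [fourCut, ha₁, hb₁]⟩
  · exact ⟨r₂, hr₂, by simp [fourCut, ha₂, hb₂, hc₂]⟩
  · exact ⟨r₃, hr₃, by simp [fourCut, ha₃, hb₃, hc₃]⟩

end SplitRows

section Blocks

open scoped Finset

variable {ι R J : Type*} [DecidableEq J] (β : R → J) (C : Finset ι) (S : ι → Finset R)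

/-- The columns whose entries all lie in the `j`-th block of rows. -/
def localColumns (j : J) : Finset ι := {x ∈ C | (S x).image β = {j}}

/-- The columns whose entries do not all lie in one block of rows, including the empty ones. -/
noncomputable def globalColumns : Finset ι :=
  open Classical in {x ∈ C | ¬∃ j, (S x).image β = {j}}

lemma localColumns_subset (j : J) : localColumns β C S j ⊆ C := Finset.filter_subset _ _

variable {β C S} in
lemma mem_globalColumns {x : ι} :
    x ∈ globalColumns β C S ↔ x ∈ C ∧ ¬∃ j, (S x).image β = {j} := by
  classical exact Finset.mem_filter

lemma globalColumns_subset : globalColumns β C S ⊆ C := fun _ hx ↦ (mem_globalColumns.1 hx).1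

variable {β C S} {U : Finset R} {B : Finset J}

lemma sum_eq_sum_localColumns_add_sum_globalColumns (hU : ∀ r ∈ U, β r ∈ B)
    (hSU : ∀ x ∈ C, S x ⊆ U) (φ : ι → ℕ) :
    ∑ x ∈ C, φ x =
      ∑ j ∈ B, ∑ x ∈ localColumns β C S j, φ x + ∑ x ∈ globalColumns β C S, φ x := by
  classical
  have hdisj : (B : Set J).PairwiseDisjoint (localColumns β C S) := by
    refine fun j _ j' _ hne ↦ Finset.disjoint_left.2 fun x hx hx' ↦ hne ?_
    exact Finset.singleton_injective
      ((Finset.mem_filter.1 hx).2.symm.trans (Finset.mem_filter.1 hx').2)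
  have hunion : B.biUnion (localColumns β C S) = {x ∈ C | ∃ j, (S x).image β = {j}} := by
    ext x
    simp only [localColumns, Finset.mem_biUnion, Finset.mem_filter]
    refine ⟨fun ⟨j, _, hx, hj⟩ ↦ ⟨hx, j, hj⟩, fun ⟨hx, j, hj⟩ ↦ ⟨j, ?_, hx, hj⟩⟩
    obtain ⟨r, hr, rfl⟩ := Finset.mem_image.1 (hj ▸ Finset.mem_singleton_self j)
    exact hU r (hSU x hx hr)
  rw [← Finset.sum_biUnion hdisj, hunion, globalColumns, Finset.sum_filter_add_sum_filter_not]

lemma image_subset_of_forall_mem {X : Finset R} (hU : ∀ r ∈ U, β r ∈ B) (hX : X ⊆ U) :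
    X.image β ⊆ B :=
  Finset.image_subset_iff.2 fun r hr ↦ hU r (hX hr)

lemma subset_block_of_mem_localColumns {j : J} {x : ι}
    (hSU : ∀ x ∈ C, S x ⊆ U) (hx : x ∈ localColumns β C S j) :
    S x ⊆ {r ∈ U | β r = j} := by
  obtain ⟨hxC, hj⟩ := Finset.mem_filter.1 hx
  exact fun r hr ↦ Finset.mem_filter.2
    ⟨hSU x hxC hr, Finset.mem_singleton.1 (hj ▸ Finset.mem_image_of_mem β hr)⟩

lemma sum_card_le_mul_card {c : ℕ} (hSU : ∀ x ∈ C, S x ⊆ U) (hc : #U ≤ c) :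
    ∑ x ∈ C, #(S x) ≤ c * #C := by
  rw [mul_comm, ← smul_eq_mul]
  exact Finset.sum_le_card_nsmul _ _ _ fun x hx ↦ (Finset.card_le_card (hSU x hx)).trans hc

end Blocks

section Formations

open scoped Finset

variable {ι R J : Type*} [LinearOrder R] [LinearOrder J]

/-- A `(t, s)`-formation in the `0`-`1` matrix whose columns are indexed by `C`, column `x` having
its `1`-entries in the rows `S x`: some `t` columns have an entry in every interval of a partition
of the rows into `s` intervals, encoded as the fibres of a monotone map to `Fin s`. -/
def HasFormation (t s : ℕ) (C : Finset ι) (S : ι → Finset R) : Prop :=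
  ∃ T ⊆ C, #T = t ∧ ∃ g : R → Fin s, Monotone g ∧ ∀ x ∈ T, Set.SurjOn g (S x) Set.univ

lemma HasFormation.mono {t s : ℕ} {C C' : Finset ι} {S : ι → Finset R} (hC : C ⊆ C')
    (h : HasFormation t s C S) : HasFormation t s C' S :=
  let ⟨T, hT, hg⟩ := h
  ⟨T, hT.trans hC, hg⟩

lemma HasFormation.of_image {t s : ℕ} {C : Finset ι} {S : ι → Finset R} {β : R → J}
    (hβ : Monotone β) (h : HasFormation t s C fun x ↦ (S x).image β) : HasFormation t s C S := by
  obtain ⟨T, hT, hcard, g, hg, hsurj⟩ := h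
  refine ⟨T, hT, hcard, g ∘ β, hg.comp hβ, fun x hx ↦ ?_⟩
  have h := hsurj x hx
  rw [Finset.coe_image] at h
  exact h.comp (Set.surjOn_image β (S x))

lemma sum_card_splitRows_le {t s : ℕ} {C : Finset ι} {S : ι → Finset R} {U : Finset R}
    {g : R → R → Fin s} (hg : ∀ r, Monotone (g r)) (hSU : ∀ x ∈ C, S x ⊆ U)
    (hS : ¬HasFormation (t + 1) s C S) : ∑ x ∈ C, #(splitRows g (S x)) ≤ t * #U := by
  have hrow (r : R) : #{x ∈ C | r ∈ splitRows g (S x)} ≤ t := by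
    by_contra! h
    obtain ⟨T, hT, hcard⟩ := Finset.exists_subset_card_eq (Nat.succ_le_of_lt h)
    exact hS ⟨T, hT.trans (Finset.filter_subset _ _), hcard, g r, hg r, fun x hx ↦
      (mem_splitRows.1 (Finset.mem_filter.1 (hT hx)).2).2⟩
  have hcol (x) (hx : x ∈ C) : splitRows g (S x) = {r ∈ U | r ∈ splitRows g (S x)} := by
    rw [Finset.filter_mem_eq_inter, eq_comm, Finset.inter_eq_right]
    exact (splitRows_subset g (S x)).trans (hSU x hx)
  calc ∑ x ∈ C, #(splitRows g (S x)) = ∑ x ∈ C, #{r ∈ U | r ∈ splitRows g (S x)} :=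
        Finset.sum_congr rfl fun x hx ↦ congrArg Finset.card (hcol x hx)
    _ = ∑ r ∈ U, #{x ∈ C | r ∈ splitRows g (S x)} :=
        Finset.sum_card_bipartiteAbove_eq_sum_card_bipartiteBelow _
    _ ≤ t * #U := by
        rw [mul_comm, ← smul_eq_mul]
        exact Finset.sum_le_card_nsmul _ _ _ fun r _ ↦ hrow r

section Cuts

lemma monotone_fourCut {a b c : Set R} (ha : IsLowerSet a) (hb : IsLowerSet b)
    (hc : IsLowerSet c) : Monotone (fourCut a b c) := by
  intro r r' h
  have := ha h
  have := hb h
  have := hc h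
  unfold fourCut
  split_ifs <;> first | decide | tauto

/-- The partition of the rows, grouped into blocks by `β`, into the rows before `r`, the row `r`,
the later rows of its block, and the later blocks. -/
noncomputable def firstCut (β : R → J) (r : R) : R → Fin 4 :=
  fourCut (Set.Iio r) (Set.Iic r) (β ⁻¹' Set.Iic (β r))

/-- The partition of the rows, grouped into blocks by `β`, into the blocks before that of `r`, the
earlier rows of its block, the rest of its block, and the later blocks. -/
noncomputable def middleCut (β : R → J) (r : R) : R → Fin 4 :=
  fourCut (β ⁻¹' Set.Iio (β r)) (Set.Iio r) (β ⁻¹' Set.Iic (β r))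

/-- The partition of the rows, grouped into blocks by `β`, into the blocks before that of `r`, the
earlier rows of its block, the row `r`, and the rows after `r`. -/
noncomputable def lastCut (β : R → J) (r : R) : R → Fin 4 :=
  fourCut (β ⁻¹' Set.Iio (β r)) (Set.Iio r) (Set.Iic r)

variable {β : R → J} {X : Finset R} {r r₀ r₁ r₂ r₃ : R}

lemma monotone_firstCut (hβ : Monotone β) (r : R) : Monotone (firstCut β r) :=
  monotone_fourCut (isLowerSet_Iio _) (isLowerSet_Iic _) ((isLowerSet_Iic _).preimage hβ)

lemma monotone_middleCut (hβ : Monotone β) (r : R) : Monotone (middleCut β r) :=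
  monotone_fourCut ((isLowerSet_Iio _).preimage hβ) (isLowerSet_Iio _)
    ((isLowerSet_Iic _).preimage hβ)

lemma monotone_lastCut (hβ : Monotone β) (r : R) : Monotone (lastCut β r) :=
  monotone_fourCut ((isLowerSet_Iio _).preimage hβ) (isLowerSet_Iio _) (isLowerSet_Iic _)

lemma mem_splitRows_firstCut (hβ : Monotone β) (hr : r ∈ X) (h₀ : ∃ r₀ ∈ X, r₀ < r)
    (h₂ : ∃ r₂ ∈ X, r < r₂ ∧ β r₂ = β r) (h₃ : ∃ r₃ ∈ X, β r < β r₃) :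
    r ∈ splitRows (firstCut β) X := by
  refine mem_splitRows.2 ⟨hr, surjOn_fourCut Set.Iio_subset_Iic_self (fun _ h ↦ hβ h) h₀
    ⟨r, hr, lt_irrefl r, le_rfl⟩ ?_ ?_⟩
  · exact h₂.imp fun _ ⟨hX, hlt, heq⟩ ↦ ⟨hX, hlt.not_ge, heq.le⟩
  · exact h₃.imp fun _ ⟨hX, hlt⟩ ↦ ⟨hX, hlt.not_ge⟩

lemma mem_splitRows_middleCut (hβ : Monotone β) (hr : r ∈ X) (h₀ : ∃ r₀ ∈ X, β r₀ < β r)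
    (h₁ : ∃ r₁ ∈ X, r₁ < r ∧ β r₁ = β r) (h₃ : ∃ r₃ ∈ X, β r < β r₃) :
    r ∈ splitRows (middleCut β) X := by
  refine mem_splitRows.2 ⟨hr, surjOn_fourCut (fun _ h ↦ hβ.reflect_lt h)
    (fun _ h ↦ hβ h.le) h₀ ?_ ⟨r, hr, lt_irrefl r, le_rfl⟩ ?_⟩
  · exact h₁.imp fun _ ⟨hX, hlt, heq⟩ ↦ ⟨hX, heq.not_lt, hlt⟩
  · exact h₃.imp fun _ ⟨hX, hlt⟩ ↦ ⟨hX, hlt.not_ge⟩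

lemma mem_splitRows_lastCut (hβ : Monotone β) (hr : r ∈ X) (h₀ : ∃ r₀ ∈ X, β r₀ < β r)
    (h₁ : ∃ r₁ ∈ X, r₁ < r ∧ β r₁ = β r) (h₃ : ∃ r₃ ∈ X, r < r₃) :
    r ∈ splitRows (lastCut β) X := by
  refine mem_splitRows.2 ⟨hr, surjOn_fourCut (fun _ h ↦ hβ.reflect_lt h)
    Set.Iio_subset_Iic_self h₀ ?_ ⟨r, hr, lt_irrefl r, le_rfl⟩ ?_⟩
  · exact h₁.imp fun _ ⟨hX, hlt, heq⟩ ↦ ⟨hX, heq.not_lt, hlt⟩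
  · exact h₃.imp fun _ ⟨hX, hlt⟩ ↦ ⟨hX, hlt.not_ge⟩

lemma card_filter_blockMin_le (β : R → J) (X : Finset R) :
    #{r ∈ X | ∀ r' ∈ X, r' < r → β r' ≠ β r} ≤ #(X.image β) := by
  refine Finset.card_le_card_of_injOn β
    (fun r hr ↦ Finset.mem_image_of_mem β (Finset.mem_filter.1 hr).1) fun r hr r' hr' heq ↦ ?_
  obtain ⟨hrX, hr⟩ := Finset.mem_filter.1 hr
  obtain ⟨hrX', hr'⟩ := Finset.mem_filter.1 hr'
  exact le_antisymm (not_lt.1 fun h ↦ hr r' hrX' h heq.symm) (not_lt.1 fun h ↦ hr' r hrX h heq)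

lemma card_filter_blockMax_le_one (β : R → J) (X : Finset R) (j : J) :
    #{r ∈ X | β r = j ∧ ∀ r' ∈ X, r < r' → β r' ≠ j} ≤ 1 := by
  refine Finset.card_le_one.2 fun r hr r' hr' ↦ ?_
  obtain ⟨hrX, hrj, hr⟩ := Finset.mem_filter.1 hr
  obtain ⟨hrX', hrj', hr'⟩ := Finset.mem_filter.1 hr'
  exact le_antisymm (not_lt.1 fun h ↦ hr' r hrX h hrj) (not_lt.1 fun h ↦ hr r' hrX' h hrj')

-- Apart from the lowest row in each block and the top rows of the first and the last block, each
-- row of a column meeting several blocks separates the column into four parts.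
lemma card_le_card_image_add_card_splitRows (hβ : Monotone β) (hX : ¬∃ j, X.image β = {j}) :
    #X ≤ #(X.image β) + 2 + (#(splitRows (firstCut β) X) + #(splitRows (middleCut β) X) +
      #(splitRows (lastCut β) X)) := by
  rcases X.eq_empty_or_nonempty with rfl | hne
  · simp
  obtain ⟨p, hp, hpmin⟩ := X.exists_min_image β hne
  obtain ⟨q, hq, hqmax⟩ := X.exists_max_image β hne
  have hpq : β p < β q := by
    refine (hpmin q hq).lt_of_ne fun h ↦ hX ⟨β p, ?_⟩
    refine Finset.eq_singleton_iff_nonempty_unique_mem.2 ⟨hne.image β, ?_⟩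
    exact Finset.forall_mem_image.2 fun r hr ↦ (hpmin r hr).antisymm' (h ▸ hqmax r hr)
  have hcover : X ⊆ {r ∈ X | ∀ r' ∈ X, r' < r → β r' ≠ β r} ∪
      ({r ∈ X | β r = β p ∧ ∀ r' ∈ X, r < r' → β r' ≠ β p} ∪
        {r ∈ X | β r = β q ∧ ∀ r' ∈ X, r < r' → β r' ≠ β q}) ∪
      (splitRows (firstCut β) X ∪ splitRows (middleCut β) X ∪ splitRows (lastCut β) X) := by
    intro r hr
    simp only [Finset.mem_union, Finset.mem_filter, hr, true_and]
    by_contra! h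
    obtain ⟨⟨hlow, hmaxp, hmaxq⟩, ⟨hfirst, hmiddle⟩, hlast⟩ := h
    rcases (hpmin r hr).eq_or_lt with hrp | hpr
    · obtain ⟨r₂, hr₂⟩ := hmaxp hrp.symm
      exact hfirst (mem_splitRows_firstCut hβ hr (hlow.imp fun _ h ↦ ⟨h.1, h.2.1⟩)
        ⟨r₂, hrp ▸ hr₂⟩ ⟨q, hq, hrp ▸ hpq⟩)
    rcases (hqmax r hr).eq_or_lt with hrq | hrq
    · exact hlast (mem_splitRows_lastCut hβ hr ⟨p, hp, hpr⟩ hlow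
        ((hmaxq hrq).imp fun _ h ↦ ⟨h.1, h.2.1⟩))
    · exact hmiddle (mem_splitRows_middleCut hβ hr ⟨p, hp, hpr⟩ hlow ⟨q, hq, hrq⟩)
  have hmin := card_filter_blockMin_le β X
  have hmaxp := card_filter_blockMax_le_one β X (β p)
  have hmaxq := card_filter_blockMax_le_one β X (β q)
  grw [Finset.card_le_card hcover, Finset.card_union_le, Finset.card_union_le,
    Finset.card_union_le, Finset.card_union_le, Finset.card_union_le]
  omega

end Cuts

lemma sum_card_le_of_blocks {β : R → J} {B : Finset J} {C : Finset ι} {S : ι → Finset R}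
    {U : Finset R} {c c' e E t : ℕ} (hβ : Monotone β) (hU : ∀ r ∈ U, β r ∈ B)
    (hSU : ∀ x ∈ C, S x ⊆ U) (hS : ¬HasFormation (t + 1) 4 C S) (hc : c' + 2 ≤ c)
    (hlocal : ∀ j ∈ B, ∑ x ∈ localColumns β C S j, #(S x) ≤
      c * #(localColumns β C S j) + e * #{r ∈ U | β r = j})
    (hglobal : ∑ x ∈ globalColumns β C S, #((S x).image β) ≤
      c' * #(globalColumns β C S) + E) :
    ∑ x ∈ C, #(S x) ≤ c * #C + (e * #U + E + 3 * t * #U) := by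
  have hlocalSum : ∑ j ∈ B, ∑ x ∈ localColumns β C S j, #(S x) ≤
      c * ∑ j ∈ B, #(localColumns β C S j) + e * #U := by
    rw [Finset.card_eq_sum_card_fiberwise hU, Finset.mul_sum, Finset.mul_sum,
      ← Finset.sum_add_distrib]
    exact Finset.sum_le_sum hlocal
  have hsplit (g : R → R → Fin 4) (hg : ∀ r, Monotone (g r)) :
      ∑ x ∈ globalColumns β C S, #(splitRows g (S x)) ≤ t * #U :=
    sum_card_splitRows_le hg (fun x hx ↦ hSU x (globalColumns_subset β C S hx))
      fun h ↦ hS (h.mono (globalColumns_subset β C S))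
  have hglobalSum := Finset.sum_le_sum fun x (hx : x ∈ globalColumns β C S) ↦
    card_le_card_image_add_card_splitRows hβ (mem_globalColumns.1 hx).2
  simp only [Finset.sum_add_distrib, Finset.sum_const, smul_eq_mul] at hglobalSum
  have hcardC : #C = ∑ j ∈ B, #(localColumns β C S j) + #(globalColumns β C S) := by
    simpa only [Finset.card_eq_sum_ones] using
      sum_eq_sum_localColumns_add_sum_globalColumns hU hSU fun _ ↦ 1
  have hcmul : (c' + 2) * #(globalColumns β C S) ≤ c * #(globalColumns β C S) :=
    Nat.mul_le_mul_right _ hc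
  have hfirst := hsplit (firstCut β) (monotone_firstCut hβ)
  have hmiddle := hsplit (middleCut β) (monotone_middleCut hβ)
  have hlast := hsplit (lastCut β) (monotone_lastCut hβ)
  rw [sum_eq_sum_localColumns_add_sum_globalColumns hU hSU, hcardC]
  linarith

lemma exists_monotone_card_fiber_le {U : Finset R} {w b : ℕ} (hw : 0 < w) (hb : #U ≤ b * w) :
    ∃ β : R → ℕ, Monotone β ∧ (∀ r ∈ U, β r < b) ∧ ∀ j, #{r ∈ U | β r = j} ≤ w := by
  have hmono : Monotone fun r ↦ #{u ∈ U | u < r} := fun r r' h ↦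
    Finset.card_le_card <| Finset.monotone_filter_right U fun _ _ hu ↦ hu.trans_le h
  have hstrict : StrictMonoOn (fun r ↦ #{u ∈ U | u < r}) U := fun r hr r' _ h ↦
    Finset.card_lt_card <| (Finset.ssubset_iff_of_subset
      (Finset.monotone_filter_right U fun _ _ hu ↦ hu.trans h)).2
      ⟨r, Finset.mem_filter.2 ⟨hr, h⟩, fun hr ↦ lt_irrefl r (Finset.mem_filter.1 hr).2⟩
  refine ⟨fun r ↦ #{u ∈ U | u < r} / w, fun r r' h ↦ Nat.div_le_div_right (hmono h),
    fun r hr ↦ ?_, fun j ↦ ?_⟩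
  · refine (Nat.div_lt_iff_lt_mul hw).2 (lt_of_lt_of_le (Finset.card_lt_card ?_) hb)
    exact Finset.filter_ssubset.2 ⟨r, hr, lt_irrefl r⟩
  · calc #{r ∈ U | #{u ∈ U | u < r} / w = j} ≤ #(Finset.Ico (j * w) (j * w + w)) := by
          refine Finset.card_le_card_of_injOn (fun r ↦ #{u ∈ U | u < r}) (fun r hr ↦ ?_)
            (hstrict.injOn.mono fun r hr ↦ (Finset.mem_filter.1 hr).1)
          have hdiv := (Nat.div_eq_iff hw).1 (Finset.mem_filter.1 hr).2
          exact Finset.mem_coe.2 (Finset.mem_Ico.2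
            ⟨hdiv.1, (Nat.le_sub_one_iff_lt (by omega)).1 hdiv.2⟩)
      _ = w := by simp

lemma exists_monotone_lt_and_card_fiber_le (U : Finset R) {w : ℕ} (hw : 0 < w) :
    ∃ b ≤ #U, b * w ≤ #U + w ∧ ∃ β : R → ℕ, Monotone β ∧ (∀ r ∈ U, β r < b) ∧
      ∀ j, #{r ∈ U | β r = j} ≤ w := by
  refine ⟨#U ⌈/⌉ w, (ceilDiv_le_iff_le_mul hw).2 (Nat.le_mul_of_pos_left _ hw), ?_,
    exists_monotone_card_fiber_le hw (mul_comm w _ ▸ le_smul_ceilDiv hw)⟩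
  rw [Nat.ceilDiv_eq_add_pred_div]
  exact (Nat.div_mul_le_self _ _).trans (by omega)

lemma sum_card_le_alphaHier_two {t : ℕ} {C : Finset ι} {S : ι → Finset R} {U : Finset R}
    (hSU : ∀ x ∈ C, S x ⊆ U) (hS : ¬HasFormation (t + 1) 4 C S) :
    ∑ x ∈ C, #(S x) ≤ 4 * #C + 3 * t * (#U * alphaHier 2 #U) := by
  induction hm : #U using Nat.strong_induction_on generalizing U C with
  | _ m ih =>
    by_cases hm1 : m ≤ 1
    · exact (sum_card_le_mul_card hSU (by omega)).trans (Nat.le_add_right _ _)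
    have hα : alphaHier 2 m = 1 + alphaHier 2 ((m + 1) / 2) :=
      alphaHier_succ_eq_one_add le_rfl (by omega)
    generalize hw : (m + 1) / 2 = w at hα
    obtain ⟨β, hβ, hβU, hβw⟩ : ∃ β : R → ℕ, Monotone β ∧ (∀ r ∈ U, β r < 2) ∧ _ :=
      exists_monotone_card_fiber_le (by omega : 0 < w) (by omega)
    have hU (r) (hr : r ∈ U) : β r ∈ Finset.range 2 := Finset.mem_range.2 (hβU r hr)
    have hlocal (j) (_ : j ∈ Finset.range 2) : ∑ x ∈ localColumns β C S j, #(S x) ≤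
        4 * #(localColumns β C S j) + 3 * t * alphaHier 2 w * #{r ∈ U | β r = j} := by
      have := ih _ ((hβw j).trans_lt (by omega))
        (fun x hx ↦ subset_block_of_mem_localColumns hSU hx)
        (fun h ↦ hS (h.mono (localColumns_subset β C S j))) rfl
      grw [this, monotone_alphaHier 2 (hβw j)]
      exact le_of_eq (by ring)
    have hglobal : ∑ x ∈ globalColumns β C S, #((S x).image β) ≤
        2 * #(globalColumns β C S) + 0 :=
      sum_card_le_mul_card (fun x hx ↦ image_subset_of_forall_mem hU
        (hSU x (globalColumns_subset β C S hx))) (Finset.card_range 2).le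
    refine (sum_card_le_of_blocks hβ hU hSU hS le_rfl hlocal hglobal).trans (le_of_eq ?_)
    rw [hm, hα]
    ring

lemma two_mul_mul_alphaHier_le {k m : ℕ} (hk : 2 ≤ k) (hm : 8 * (k + 1) ^ 2 ≤ m) :
    2 * (k + 1) * alphaHier k m ≤ m := by
  refine (Nat.pow_le_pow_iff_left two_ne_zero).1 ?_
  calc (2 * (k + 1) * alphaHier k m) ^ 2 = 4 * (k + 1) ^ 2 * alphaHier k m ^ 2 := by ring
    _ ≤ 4 * (k + 1) ^ 2 * (2 * m) := Nat.mul_le_mul_left _ (alphaHier_sq_le hk m)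
    _ = 8 * (k + 1) ^ 2 * m := by ring
    _ ≤ m ^ 2 := by rw [sq m]; exact Nat.mul_le_mul_right m hm

-- The rows are cut into blocks of `alphaHier k #U` rows. The columns lying in one block are handled
-- by induction on the number of rows, and the others, after contracting each block to a row, by
-- induction on `k`.
theorem sum_card_le_alphaHier {k t : ℕ} {C : Finset ι} {S : ι → Finset ℕ} {U : Finset ℕ}
    (hk : 2 ≤ k) (hSU : ∀ x ∈ C, S x ⊆ U) (hS : ¬HasFormation (t + 1) 4 C S) :
    ∑ x ∈ C, #(S x) ≤ 8 * k ^ 2 * #C + 6 * t * k * (#U * alphaHier k #U) := by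
  induction k, hk using Nat.le_induction generalizing U C S with
  | base =>
    grw [sum_card_le_alphaHier_two hSU hS]
    gcongr ?_ * _ + ?_ * _ <;> omega
  | succ k hk ihk =>
  induction hm : #U using Nat.strong_induction_on generalizing U C with
  | _ m ih =>
    by_cases hm1 : m < 8 * (k + 1) ^ 2
    · exact (sum_card_le_mul_card hSU (by omega)).trans (Nat.le_add_right _ _)
    push Not at hm1
    have hm2 : 2 ≤ m := by nlinarith
    have hα : alphaHier (k + 1) m = 1 + alphaHier (k + 1) (alphaHier k m) :=
      alphaHier_succ_eq_one_add (by omega) hm2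
    have hwm := alphaHier_lt_self (by omega : 1 ≤ k) hm2
    have hw : 0 < alphaHier k m := alphaHier_pos k hm2
    have hwk := two_mul_mul_alphaHier_le hk hm1
    generalize hwdef : alphaHier k m = w at *
    obtain ⟨b, hbm, hbw, β, hβ, hβU, hβw⟩ := exists_monotone_lt_and_card_fiber_le U hw
    rw [hm] at hbm hbw
    have hU (r) (hr : r ∈ U) : β r ∈ Finset.range b := Finset.mem_range.2 (hβU r hr)
    have hlocal (j) (_ : j ∈ Finset.range b) : ∑ x ∈ localColumns β C S j, #(S x) ≤
        8 * (k + 1) ^ 2 * #(localColumns β C S j) +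
          6 * t * (k + 1) * alphaHier (k + 1) w * #{r ∈ U | β r = j} := by
      have := ih _ ((hβw j).trans_lt hwm)
        (fun x hx ↦ subset_block_of_mem_localColumns hSU hx)
        (fun h ↦ hS (h.mono (localColumns_subset β C S j))) rfl
      grw [this, monotone_alphaHier (k + 1) (hβw j)]
      exact le_of_eq (by ring)
    have hglobal : ∑ x ∈ globalColumns β C S, #((S x).image β) ≤
        8 * k ^ 2 * #(globalColumns β C S) + 6 * t * k * (m + w) := by
      have := ihk (U := Finset.range b) (fun x hx ↦ image_subset_of_forall_mem hU
        (hSU x (globalColumns_subset β C S hx)))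
        fun h ↦ hS ((h.of_image hβ).mono (globalColumns_subset β C S))
      rw [Finset.card_range] at this
      grw [this, monotone_alphaHier k hbm, hwdef, hbw]
    refine (sum_card_le_of_blocks hβ hU hSU hS (by nlinarith) hlocal hglobal).trans ?_
    rw [hm, hα]
    have := Nat.mul_le_mul_left (3 * t) hwk
    nlinarith

end Formations

section OrderShattering

variable {ι V W : Type*}

/-- Every order pattern on the tuple `e` of coordinates is the pattern of some function of `P`. The
functions may take a value more than once. -/
def OrderShatters [LT V] {t : ℕ} (P : Finset (ι → V)) (e : Fin t → ι) : Prop :=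
  ∀ σ : Equiv.Perm (Fin t), ∃ f ∈ P, ∀ i j, σ i < σ j → f (e i) < f (e j)

/-- The analogue of `VCDimLE` for functions on an unordered index set, which, unlike permutations,
can be restricted to a set of coordinates and composed with monotone maps. -/
def OrderVCDimLE [LT V] (k : ℕ) (P : Finset (ι → V)) : Prop :=
  ∀ e : Fin (k + 1) → ι, Function.Injective e → ¬OrderShatters P e

lemma OrderVCDimLE.image_comp [LinearOrder V] [Preorder W] [DecidableEq (ι → W)] {k : ℕ}
    {P : Finset (ι → V)} {φ : V → W} (hP : OrderVCDimLE k P) (hφ : Monotone φ) :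
    OrderVCDimLE k (P.image (φ ∘ ·)) := fun e he hshatter ↦ hP e he fun σ ↦ by
  obtain ⟨_, hg, hσ⟩ := hshatter σ
  obtain ⟨f, hf, rfl⟩ := Finset.mem_image.1 hg
  exact ⟨f, hf, fun i j hij ↦ hφ.reflect_lt (hσ i j hij)⟩

lemma OrderVCDimLE.image_restrict [LT V] {k : ℕ} {P : Finset (ι → V)} (hP : OrderVCDimLE k P)
    (B : Finset ι) [DecidableEq (B → V)] : OrderVCDimLE k (P.image B.restrict) := by
  intro e he hshatter
  refine hP (Subtype.val ∘ e) (Subtype.val_injective.comp he) fun σ ↦ ?_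
  obtain ⟨_, hg, hσ⟩ := hshatter σ
  obtain ⟨f, hf, rfl⟩ := Finset.mem_image.1 hg
  exact ⟨f, hf, hσ⟩

/-- Every partial choice `h` of entries from the columns `S` is extended by some function of `P`.
A choice leaves column `x` open by taking a value of `h x` outside `S x`. -/
def Realizes (P : Finset (ι → V)) (S : ι → Finset V) : Prop :=
  ∀ h : ι → V, ∃ f ∈ P, ∀ x, h x ∈ S x → f x = h x

lemma Realizes.not_hasFormation [LinearOrder V] {P : Finset (ι → V)} {S : ι → Finset V} {t : ℕ}
    (hS : Realizes P S) (hP : OrderVCDimLE t P) (C : Finset ι) :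
    ¬HasFormation (t + 1) (t + 1) C S := by
  rintro ⟨T, -, hcard, g, hg, hsurj⟩
  let e : Fin (t + 1) → ι := fun i ↦ (T.equivFinOfCardEq hcard).symm i
  have he : Function.Injective e :=
    Subtype.val_injective.comp (T.equivFinOfCardEq hcard).symm.injective
  refine hP e he fun σ ↦ ?_
  choose r hr hgr using fun i ↦ hsurj (e i) (Subtype.coe_prop _) (Set.mem_univ (σ i))
  obtain ⟨f, hf, hfh⟩ := hS (Function.extend e r fun _ ↦ r 0)
  have hfr (i) : f (e i) = r i := by
    simpa only [he.extend_apply, Finset.mem_coe.1 (hr i), true_imp_iff] using hfh (e i)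
  refine ⟨f, hf, fun i j hij ↦ ?_⟩
  rw [hfr, hfr]
  exact hg.reflect_lt (by rwa [hgr, hgr])

end OrderShattering

section Sauer

open scoped Finset

variable {ι V : Type*} {D : ℕ}

lemma le_mul_one_add_choose (hD : 1 ≤ D) (e : ℕ) : e ≤ D * (1 + e.choose D) := by
  rcases lt_or_ge e D with h | h
  · exact h.le.trans (Nat.le_mul_of_pos_right D (by omega))
  · obtain ⟨D, rfl⟩ := Nat.exists_eq_add_of_le' hD
    obtain ⟨e, rfl⟩ := Nat.exists_eq_add_of_le' (hD.trans h)
    calc e + 1 ≤ (e + 1) * e.choose D :=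
          Nat.le_mul_of_pos_right _ (Nat.choose_pos (by omega))
      _ = (D + 1) * (e + 1).choose (D + 1) := by rw [Nat.add_one_mul_choose_eq, mul_comm]
      _ ≤ (D + 1) * (1 + (e + 1).choose (D + 1)) := Nat.mul_le_mul_left _ (Nat.le_add_left _ _)

lemma exists_card_filter_update_empty_le [DecidableEq ι] [DecidableEq (ι → Finset V)]
    {c : ι} {𝒮 : Finset (ι → Finset V)} (h𝒮 : ∀ S ∈ 𝒮, ∃ v, S c = {v}) (B : ι → Finset V) :
    ∃ E : Finset V, #{S ∈ 𝒮 | Function.update S c ∅ = B} ≤ #E ∧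
      ∀ v ∈ E, Function.update B c {v} ∈ 𝒮 := by
  classical
  have hupdate {S v} (hS : S ∈ ({S ∈ 𝒮 | Function.update S c ∅ = B} : Finset _))
      (hv : S c = {v}) : Function.update B c {v} = S := by
    rw [← (Finset.mem_filter.1 hS).2, Function.update_idem, ← hv, Function.update_eq_self]
  refine ⟨({S ∈ 𝒮 | Function.update S c ∅ = B} : Finset _).biUnion (· c), ?_, fun v hv ↦ ?_⟩
  · refine (Finset.card_le_card fun S hS ↦ ?_).trans
      (Finset.card_image_le (f := fun v ↦ Function.update B c {v}))
    obtain ⟨v, hv⟩ := h𝒮 S (Finset.mem_filter.1 hS).1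
    exact Finset.mem_image.2 ⟨v, Finset.mem_biUnion.2 ⟨S, hS, by simp [hv]⟩, hupdate hS hv⟩
  · obtain ⟨S, hS, hvS⟩ := Finset.mem_biUnion.1 hv
    obtain ⟨w, hw⟩ := h𝒮 S (Finset.mem_filter.1 hS).1
    obtain rfl := Finset.mem_singleton.1 (hw ▸ hvS)
    exact hupdate hS hw ▸ (Finset.mem_filter.1 hS).1

-- The members of `𝒮` agreeing outside `c` are `e` in number for some `e`; they are replaced by the
-- empty column and the `e.choose D` columns of size `D` they form at `c`.
lemma exists_empty_or_card_eq_at [DecidableEq ι] (hD : 1 ≤ D) (c : ι) (𝒮 : Finset (ι → Finset V))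
    (h𝒮 : ∀ S ∈ 𝒮, ∃ v, S c = {v}) :
    ∃ 𝒯 : Finset (ι → Finset V), #𝒮 ≤ D * #𝒯 ∧ ∀ T ∈ 𝒯, (T c = ∅ ∨ #(T c) = D) ∧
      (∃ v, Function.update T c {v} ∈ 𝒮) ∧ ∀ v ∈ T c, Function.update T c {v} ∈ 𝒮 := by
  classical
  choose E hfiber hE using exists_card_filter_update_empty_le h𝒮
  let ℬ := 𝒮.image (Function.update · c ∅)
  let part (B : ι → Finset V) : Finset (ι → Finset V) :=
    (insert ∅ ((E B).powersetCard D)).image (Function.update B c)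
  have hpart (B) : #(part B) = 1 + (#(E B)).choose D := by
    have hempty : ∅ ∉ (E B).powersetCard D := fun h ↦ by
      have := (Finset.mem_powersetCard.1 h).2
      simp only [Finset.card_empty] at this
      omega
    rw [Finset.card_image_of_injective _ (Function.update_injective B c),
      Finset.card_insert_of_notMem hempty, Finset.card_powersetCard, add_comm]
  have hbase {B} (hB : B ∈ ℬ) {T} (hT : T ∈ part B) : Function.update T c ∅ = B := by
    obtain ⟨S, -, rfl⟩ := Finset.mem_image.1 hB
    obtain ⟨X, -, rfl⟩ := Finset.mem_image.1 hT
    simp only [Function.update_idem]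
  have hdisj : (ℬ : Set (ι → Finset V)).PairwiseDisjoint part := fun B hB B' hB' hne ↦
    Finset.disjoint_left.2 fun T hT hT' ↦ hne ((hbase hB hT).symm.trans (hbase hB' hT'))
  refine ⟨ℬ.biUnion part, ?_, fun T hT ↦ ?_⟩
  · rw [Finset.card_biUnion hdisj, Finset.mul_sum,
      Finset.card_eq_sum_card_image (Function.update · c ∅)]
    refine Finset.sum_le_sum fun B _ ↦ (hfiber B).trans ?_
    rw [hpart]
    exact le_mul_one_add_choose hD _
  · obtain ⟨B, hB, hTB⟩ := Finset.mem_biUnion.1 hT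
    obtain ⟨X, hX, rfl⟩ := Finset.mem_image.1 hTB
    obtain ⟨S, hS, rfl⟩ := Finset.mem_image.1 hB
    obtain ⟨v, hv⟩ := h𝒮 S hS
    have hXE : X = ∅ ∨ X ⊆ E (Function.update S c ∅) ∧ #X = D := by
      simpa only [Finset.mem_insert, Finset.mem_powersetCard] using hX
    simp only [Function.update_idem, Function.update_self]
    refine ⟨hXE.imp_right And.right, ⟨v, by rwa [← hv, Function.update_eq_self]⟩, fun v hv ↦ ?_⟩
    rcases hXE with rfl | hXE
    · exact absurd hv (Finset.notMem_empty v)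
    · simpa only [Function.update_idem] using hE _ v (hXE.1 hv)

theorem exists_realizes_empty_or_card_eq [Fintype ι] (hD : 1 ≤ D) (P : Finset (ι → V)) :
    ∃ 𝒯 : Finset (ι → Finset V), #P ≤ D ^ Fintype.card ι * #𝒯 ∧
      ∀ T ∈ 𝒯, Realizes P T ∧ ∀ x, T x = ∅ ∨ #(T x) = D := by
  classical
  suffices h : ∀ A : Finset ι, ∃ 𝒯 : Finset (ι → Finset V), #P ≤ D ^ #A * #𝒯 ∧
      ∀ T ∈ 𝒯, Realizes P T ∧ (∀ x ∈ A, T x = ∅ ∨ #(T x) = D) ∧ ∀ x ∉ A, ∃ v, T x = {v} by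
    obtain ⟨𝒯, hcard, h𝒯⟩ := h Finset.univ
    exact ⟨𝒯, hcard, fun T hT ↦ ⟨(h𝒯 T hT).1, fun x ↦ (h𝒯 T hT).2.1 x (Finset.mem_univ x)⟩⟩
  intro A
  induction A using Finset.induction_on with
  | empty =>
    refine ⟨P.image fun f x ↦ {f x}, ?_, ?_⟩
    · rw [Finset.card_empty, pow_zero, one_mul, Finset.card_image_of_injective]
      exact fun f g h ↦ funext fun x ↦ Finset.singleton_injective (congrFun h x)
    · refine Finset.forall_mem_image.2 fun f hf ↦ ⟨fun h ↦ ⟨f, hf, fun x hx ↦ ?_⟩, ?_, ?_⟩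
      · exact (Finset.mem_singleton.1 hx).symm
      · simp
      · exact fun x _ ↦ ⟨f x, rfl⟩
  | insert c A hc ih =>
    obtain ⟨𝒮, hP, h𝒮⟩ := ih
    obtain ⟨𝒯, hcard, h𝒯⟩ := exists_empty_or_card_eq_at hD c 𝒮 fun S hS ↦ (h𝒮 S hS).2.2 c hc
    refine ⟨𝒯, ?_, fun T hT ↦ ?_⟩
    · rw [Finset.card_insert_of_notMem hc, pow_succ, mul_assoc]
      exact hP.trans (Nat.mul_le_mul_left _ hcard)
    obtain ⟨hTc, ⟨v, hv⟩, hTv⟩ := h𝒯 T hT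
    have hne {x} (hx : x ≠ c) : Function.update T c {v} x = T x := Function.update_of_ne hx _ _
    refine ⟨fun h ↦ ?_, fun x hx ↦ ?_, fun x hx ↦ ?_⟩
    · by_cases hhc : h c ∈ T c
      · obtain ⟨f, hf, hfh⟩ := (h𝒮 _ (hTv _ hhc)).1 h
        refine ⟨f, hf, fun x hx ↦ hfh x ?_⟩
        rcases eq_or_ne x c with rfl | hxc
        · simp
        · rwa [Function.update_of_ne hxc]
      · obtain ⟨f, hf, hfh⟩ := (h𝒮 _ hv).1 h
        exact ⟨f, hf, fun x hx ↦ hfh x (by rwa [hne (by rintro rfl; exact hhc hx)])⟩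
    · rcases eq_or_ne x c with rfl | hxc
      · exact hTc
      · exact hne hxc ▸ (h𝒮 _ hv).2.1 x (Finset.mem_of_mem_insert_of_ne hx hxc)
    · obtain ⟨hxc, hxA⟩ := not_or.1 (Finset.mem_insert.not.1 hx)
      exact hne hxc ▸ (h𝒮 _ hv).2.2 x hxA

lemma card_le_card_image_restrict_pow [Nonempty V] {P : Finset (ι → V)}
    {𝒯 : Finset (ι → Finset V)} {B : Finset ι} [DecidableEq (B → V)]
    (h𝒯 : ∀ T ∈ 𝒯, Realizes P T) (hempty : ∀ T ∈ 𝒯, ∀ x ∉ B, T x = ∅)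
    (hcard : ∀ T ∈ 𝒯, ∀ x ∈ B, #(T x) = D) : #𝒯 ≤ #(P.image B.restrict) ^ D := by
  classical
  let columns (q : Fin D → B → V) (x : ι) : Finset V :=
    if hx : x ∈ B then Finset.univ.image fun i ↦ q i ⟨x, hx⟩ else ∅
  suffices h : 𝒯 ⊆ (Fintype.piFinset fun _ : Fin D ↦ P.image B.restrict).image columns by
    refine (Finset.card_le_card h).trans (Finset.card_image_le.trans ?_)
    rw [Fintype.card_piFinset_const]
  intro T hT
  let enum (x : B) : T x ≃ Fin D := (T x).equivFinOfCardEq (hcard T hT x x.2)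
  refine Finset.mem_image.2 ⟨fun i x ↦ (enum x).symm i, Fintype.mem_piFinset.2 fun i ↦ ?_, ?_⟩
  · obtain ⟨f, hf, hfh⟩ := h𝒯 T hT fun x ↦
      if hx : x ∈ B then (enum ⟨x, hx⟩).symm i else Classical.arbitrary V
    refine Finset.mem_image.2 ⟨f, hf, funext fun x ↦ ?_⟩
    have hfx := hfh x
    rw [dif_pos x.2] at hfx
    exact hfx (Subtype.coe_prop _)
  · funext x
    by_cases hx : x ∈ B
    · ext v
      simp only [columns, dif_pos hx, Finset.mem_image, Finset.mem_univ, true_and]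
      exact ⟨fun ⟨i, hi⟩ ↦ hi ▸ Subtype.coe_prop _,
        fun hv ↦ ⟨enum ⟨x, hx⟩ ⟨v, hv⟩, by rw [Equiv.symm_apply_apply]⟩⟩
    · simp only [columns, dif_neg hx, hempty T hT x hx]

end Sauer

section Contraction

open scoped Finset

variable {ι : Type*} [Fintype ι]

lemma card_le_pow_card_of_forall_lt {P : Finset (ι → ℕ)} {m : ℕ} (hP : ∀ f ∈ P, ∀ x, f x < m) :
    #P ≤ m ^ Fintype.card ι := by
  classical
  calc #P ≤ #(Fintype.piFinset fun _ : ι ↦ Finset.range m) := Finset.card_le_card fun f hf ↦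
        Fintype.mem_piFinset.2 fun x ↦ Finset.mem_range.2 (hP f hf x)
    _ = m ^ Fintype.card ι := by simp [Fintype.card_piFinset]

lemma card_le_pow_mul_card_image_div {t : ℕ} (ht : 0 < t) (P : Finset (ι → ℕ)) :
    #P ≤ t ^ Fintype.card ι * #(P.image ((· / t) ∘ ·)) := by
  classical
  refine Finset.card_le_mul_card_image _ _ fun g _ ↦ ?_
  calc #{f ∈ P | (· / t) ∘ f = g}
        ≤ #(Fintype.piFinset fun x ↦ Finset.Ico (g x * t) (g x * t + t)) := by
        refine Finset.card_le_card fun f hf ↦ Fintype.mem_piFinset.2 fun x ↦ ?_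
        have hdiv := (Nat.div_eq_iff ht).1 (congrFun (Finset.mem_filter.1 hf).2 x)
        exact Finset.mem_Ico.2 ⟨hdiv.1, (Nat.le_sub_one_iff_lt (by omega)).1 hdiv.2⟩
    _ = t ^ Fintype.card ι := by simp [Fintype.card_piFinset]

end Contraction

section Recursion

open scoped Finset

variable {ι : Type*} {P : Finset (ι → ℕ)} {k m : ℕ}

lemma Realizes.subset_range {S : ι → Finset ℕ} (hS : Realizes P S) (hm : ∀ f ∈ P, ∀ x, f x < m)
    (x : ι) : S x ⊆ Finset.range m := fun r hr ↦ by
  obtain ⟨f, hf, hfr⟩ := hS fun _ ↦ r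
  exact Finset.mem_range.2 (hfr x hr ▸ hm f hf x)

lemma Realizes.mul_card_le_alphaHier {S : ι → Finset ℕ} {B : Finset ι} (hS : Realizes P S)
    (hP : OrderVCDimLE 3 P) (hm : ∀ f ∈ P, ∀ x, f x < m) (hk : 2 ≤ k)
    (hB : ∀ x ∈ B, #(S x) = 16 * k ^ 2) : 4 * k * #B ≤ 9 * (m * alphaHier k m) := by
  have hsum := sum_card_le_alphaHier hk (fun x _ ↦ hS.subset_range hm x)
    (hS.not_hasFormation hP B)
  rw [Finset.sum_congr rfl hB, Finset.sum_const, Finset.card_range, smul_eq_mul] at hsum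
  refine Nat.le_of_mul_le_mul_left (?_ : 2 * k * _ ≤ 2 * k * _) (by positivity)
  linarith

theorem card_le_mul_of_forall_card_restrict_pow_le [Fintype ι] {R : ℝ} (hP : OrderVCDimLE 3 P)
    (hm : ∀ f ∈ P, ∀ x, f x < m) (hk : 2 ≤ k)
    (hR : ∀ B : Finset ι, 4 * k * #B ≤ 9 * (m * alphaHier k m) →
      (#(P.image B.restrict) : ℝ) ^ (16 * k ^ 2) ≤ R) :
    (#P : ℝ) ≤ (32 * k ^ 2) ^ Fintype.card ι * R := by
  classical
  obtain ⟨𝒯, hP𝒯, h𝒯⟩ := exists_realizes_empty_or_card_eq (D := 16 * k ^ 2) (by nlinarith) P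
  let supp (T : ι → Finset ℕ) : Finset ι := {x | T x ≠ ∅}
  have hfiber (B : Finset ι) : (#{T ∈ 𝒯 | supp T = B} : ℝ) ≤ R := by
    have hsize : ∀ T ∈ 𝒯, supp T = B → ∀ x ∈ B, #(T x) = 16 * k ^ 2 := by
      rintro T hT rfl x hx
      exact ((h𝒯 T hT).2 x).resolve_left (Finset.mem_filter.1 hx).2
    rcases Finset.eq_empty_or_nonempty {T ∈ 𝒯 | supp T = B} with h | ⟨T, hT⟩
    · rw [h, Finset.card_empty, Nat.cast_zero]
      exact (by positivity : (0 : ℝ) ≤ _).trans (hR ∅ (by simp))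
    obtain ⟨hT𝒯, hTB⟩ := Finset.mem_filter.1 hT
    refine le_trans ?_ (hR B ((h𝒯 T hT𝒯).1.mul_card_le_alphaHier hP hm hk (hsize T hT𝒯 hTB)))
    exact_mod_cast card_le_card_image_restrict_pow (fun T hT ↦ (h𝒯 T (Finset.mem_filter.1 hT).1).1)
      (fun T hT x hx ↦ by simpa [supp, ← (Finset.mem_filter.1 hT).2] using hx)
      fun T hT ↦ hsize T (Finset.mem_filter.1 hT).1 (Finset.mem_filter.1 hT).2
  have h𝒯R : (#𝒯 : ℝ) ≤ 2 ^ Fintype.card ι * R := by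
    rw [Finset.card_eq_sum_card_fiberwise (f := supp) (t := Finset.univ)
      fun T _ ↦ Finset.mem_coe.2 (Finset.mem_univ _), Nat.cast_sum]
    refine (Finset.sum_le_card_nsmul _ _ R fun B _ ↦ hfiber B).trans_eq ?_
    rw [Finset.card_univ, Fintype.card_finset, nsmul_eq_mul, Nat.cast_pow, Nat.cast_ofNat]
  calc (#P : ℝ) ≤ (16 * k ^ 2) ^ Fintype.card ι * #𝒯 := by exact_mod_cast hP𝒯
    _ ≤ (16 * k ^ 2) ^ Fintype.card ι * (2 ^ Fintype.card ι * R) := by gcongr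
    _ = (32 * k ^ 2) ^ Fintype.card ι * R := by
      rw [← mul_assoc, ← mul_pow]
      ring

lemma natCast_div_add_one_pow_le_exp (m n : ℕ) : ((m / n + 1 : ℕ) : ℝ) ^ n ≤ Real.exp m := by
  rcases Nat.eq_zero_or_pos n with rfl | hn
  · simp
  calc ((m / n + 1 : ℕ) : ℝ) ^ n ≤ Real.exp ((m : ℝ) / n) ^ n := by
        gcongr
        have hdiv : ((m / n : ℕ) : ℝ) ≤ (m : ℝ) / n := Nat.cast_div_le
        rw [Nat.cast_add_one]
        linarith [Real.add_one_le_exp ((m : ℝ) / n)]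
    _ = Real.exp m := by rw [← Real.exp_nat_mul, mul_div_cancel₀ _ (by positivity)]

lemma card_le_exp_mul_of_forall_lt_card [Fintype ι] {M : ℝ} (hP : OrderVCDimLE k P)
    (hm : ∀ f ∈ P, ∀ x, f x < m)
    (hM : ∀ Q : Finset (ι → ℕ), OrderVCDimLE k Q → (∀ f ∈ Q, ∀ x, f x < Fintype.card ι) →
      (#Q : ℝ) ≤ M) : (#P : ℝ) ≤ Real.exp m * M := by
  set t := m / Fintype.card ι + 1 with ht
  have hcard := card_le_pow_mul_card_image_div (Nat.succ_pos _ : 0 < t) P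
  calc (#P : ℝ) ≤ (t : ℝ) ^ Fintype.card ι * #(P.image ((· / t) ∘ ·)) := by exact_mod_cast hcard
    _ ≤ Real.exp m * M := by
      gcongr
      · exact natCast_div_add_one_pow_le_exp m _
      · refine hM _ (hP.image_comp fun _ _ h ↦ Nat.div_le_div_right h) ?_
        refine Finset.forall_mem_image.2 fun f hf x ↦ Nat.div_lt_of_lt_mul ?_
        have : Nonempty ι := ⟨x⟩
        rw [mul_comm]
        exact (hm f hf x).trans (Nat.lt_mul_div_succ m Fintype.card_pos)

lemma exp_mul_pow_pow_le {K : ℝ} {n b : ℕ} (hK : 1 ≤ K) (hk : 0 < k) (hmn : m * k ^ 2 ≤ 2 * n)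
    (hbm : 4 * k * b ≤ 27 * m) :
    (Real.exp m * K ^ b) ^ (16 * k ^ 2) ≤ (Real.exp 32 * K ^ ((216 : ℝ) / k)) ^ n := by
  rw [mul_pow, mul_pow]
  gcongr ?_ * ?_
  · rw [← Real.exp_nat_mul, ← Real.exp_nat_mul, Real.exp_le_exp]
    exact_mod_cast (by linarith : 16 * k ^ 2 * m ≤ n * 32)
  · rw [← pow_mul, ← Real.rpow_natCast K, ← Real.rpow_mul_natCast (by positivity)]
    refine Real.rpow_le_rpow_of_exponent_le hK ?_
    rw [div_mul_eq_mul_div, le_div_iff₀ (by positivity)]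
    exact_mod_cast (by nlinarith : b * (16 * k ^ 2) * k ≤ 216 * n)

lemma card_le_pow_of_forall_card_lt [Fintype ι] {K : ℝ} (hP : OrderVCDimLE 3 P)
    (hlt : ∀ f ∈ P, ∀ x, f x < Fintype.card ι) (hk : 3 ≤ k) (hkι : k ^ 2 ≤ Fintype.card ι)
    (hα : alphaHier k (Fintype.card ι) ≤ 3) (hK : 1 ≤ K)
    (ih : ∀ B : Finset ι, #B < Fintype.card ι → ∀ Q : Finset (B → ℕ), OrderVCDimLE 3 Q →
      (∀ f ∈ Q, ∀ x, f x < Fintype.card B) → (#Q : ℝ) ≤ K ^ #B) :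
    (#P : ℝ) ≤ (32 * Real.exp 32 * k ^ 4 * K ^ ((216 : ℝ) / k)) ^ Fintype.card ι := by
  set n := Fintype.card ι with hn
  set m := n / k ^ 2 + 1 with hm
  let P' := P.image ((· / k ^ 2) ∘ ·)
  have hk2 : 9 ≤ k ^ 2 := by nlinarith
  have hmn : m * k ^ 2 ≤ 2 * n := by
    rw [hm, add_mul]
    linarith [Nat.div_mul_le_self n (k ^ 2)]
  have hα' : alphaHier k m ≤ 3 := (monotone_alphaHier k (by nlinarith)).trans hα
  have hP' : OrderVCDimLE 3 P' := hP.image_comp fun _ _ h ↦ Nat.div_le_div_right h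
  have hlt' : ∀ f ∈ P', ∀ x, f x < m := Finset.forall_mem_image.2 fun f hf x ↦
    Nat.lt_succ_of_le (Nat.div_le_div_right (hlt f hf x).le)
  have hrestrict (B : Finset ι) (hB : 4 * k * #B ≤ 9 * (m * alphaHier k m)) :
      (#(P'.image B.restrict) : ℝ) ^ (16 * k ^ 2) ≤
        (Real.exp 32 * K ^ ((216 : ℝ) / k)) ^ n := by
    have hBm : 4 * k * #B ≤ 27 * m := hB.trans (by nlinarith)
    have hBn : #B < n := by nlinarith [Nat.mul_le_mul_left (k ^ 2) hBm]
    refine le_trans ?_ (exp_mul_pow_pow_le hK (by omega) hmn hBm)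
    gcongr
    exact card_le_exp_mul_of_forall_lt_card (hP'.image_restrict B)
      (Finset.forall_mem_image.2 fun f hf x ↦ hlt' f hf x) (ih B hBn)
  calc (#P : ℝ) ≤ (k ^ 2) ^ n * #P' := by
        exact_mod_cast card_le_pow_mul_card_image_div (by positivity) P
    _ ≤ (k ^ 2) ^ n * ((32 * k ^ 2) ^ n * (Real.exp 32 * K ^ ((216 : ℝ) / k)) ^ n) := by
      gcongr
      exact card_le_mul_of_forall_card_restrict_pow_le hP' hlt' (by omega) hrestrict
    _ = (32 * Real.exp 32 * k ^ 4 * K ^ ((216 : ℝ) / k)) ^ n := by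
      rw [← mul_pow, ← mul_pow]
      ring

theorem card_le_pow_of_alphaHier_le_three [Fintype ι] {K : ℝ} (hP : OrderVCDimLE 3 P)
    (hlt : ∀ f ∈ P, ∀ x, f x < Fintype.card ι) (hk : 3 ≤ k)
    (hα : alphaHier k (Fintype.card ι) ≤ 3) (hK₁ : 1 ≤ K)
    (hK : 32 * Real.exp 32 * k ^ 4 * K ^ ((216 : ℝ) / k) ≤ K) :
    (#P : ℝ) ≤ K ^ Fintype.card ι := by
  induction hn : Fintype.card ι using Nat.strong_induction_on generalizing ι with
  | _ n ih =>
  subst hn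
  rcases le_total (k ^ 2) (Fintype.card ι) with hkι | hkι
  · refine (card_le_pow_of_forall_card_lt hP hlt hk hkι hα hK₁ fun B hB Q hQ hQlt ↦ ?_).trans
      (pow_le_pow_left₀ (by positivity) hK _)
    rw [← Fintype.card_coe B] at hB ⊢
    exact ih _ hB hQ hQlt ((monotone_alphaHier k hB.le).trans hα) rfl
  · have hk₁ : (1 : ℝ) ≤ k := by exact_mod_cast (by omega : 1 ≤ k)
    have hιK : (Fintype.card ι : ℝ) ≤ K := calc
      (Fintype.card ι : ℝ) ≤ k ^ 2 := by exact_mod_cast hkι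
      _ ≤ 1 * 1 * k ^ 4 * 1 := by
        rw [one_mul, one_mul, mul_one]
        exact pow_le_pow_right₀ hk₁ (by norm_num)
      _ ≤ 32 * Real.exp 32 * k ^ 4 * K ^ ((216 : ℝ) / k) := by
        gcongr
        · norm_num
        · exact Real.one_le_exp (by norm_num)
        · exact Real.one_le_rpow hK₁ (by positivity)
      _ ≤ K := hK
    calc (#P : ℝ) ≤ (Fintype.card ι : ℝ) ^ Fintype.card ι := by
          exact_mod_cast card_le_pow_card_of_forall_lt hlt
      _ ≤ K ^ Fintype.card ι := by gcongr

lemma eventually_mul_rpow_rpow_le {ε : ℝ} (hε : 0 < ε) (c b : ℝ) :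
    ∀ᶠ k : ℕ in Filter.atTop,
      c * (k : ℝ) ^ 4 * ((k : ℝ) ^ (4 + ε)) ^ (b / k) ≤ (k : ℝ) ^ (4 + ε) := by
  have hconst : ∀ᶠ k : ℕ in Filter.atTop, c ≤ (k : ℝ) ^ (ε / 2) :=
    ((tendsto_rpow_atTop (by linarith)).comp tendsto_natCast_atTop_atTop).eventually_ge_atTop c
  have hexp : ∀ᶠ k : ℕ in Filter.atTop, (4 + ε) * b / (ε / 2) ≤ k :=
    tendsto_natCast_atTop_atTop.eventually_ge_atTop _
  filter_upwards [hconst, hexp, Filter.eventually_ge_atTop 1] with k hck hεk hk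
  have hk₁ : (1 : ℝ) ≤ k := by exact_mod_cast hk
  have hk₀ : (0 : ℝ) < k := by positivity
  have hpow : ((k : ℝ) ^ (4 + ε)) ^ (b / k) ≤ (k : ℝ) ^ (ε / 2) := by
    rw [← Real.rpow_mul hk₀.le]
    refine Real.rpow_le_rpow_of_exponent_le hk₁ ?_
    rw [div_le_iff₀ (by linarith)] at hεk
    rw [← mul_div_assoc, div_le_iff₀ hk₀]
    linarith
  calc c * (k : ℝ) ^ 4 * ((k : ℝ) ^ (4 + ε)) ^ (b / k)
      ≤ (k : ℝ) ^ (ε / 2) * (k : ℝ) ^ 4 * (k : ℝ) ^ (ε / 2) := by gcongr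
    _ = (k : ℝ) ^ (4 + ε) := by
      rw [← Real.rpow_natCast, ← Real.rpow_add hk₀, ← Real.rpow_add hk₀]
      congr 1
      push_cast
      ring

theorem r3_upper_bound_general :
    ∀ ε : ℝ, 0 < ε → ∃ n₀ : ℕ, ∀ n : ℕ, n₀ ≤ n →
      ∀ {ι : Type*} [Fintype ι], Fintype.card ι = n →
        ∀ P : Finset (ι → ℕ), OrderVCDimLE 3 P → (∀ f ∈ P, ∀ x, f x < n) →
          (#P : ℝ) ≤ (invAck n : ℝ) ^ ((4 + ε) * (n : ℝ)) := by
  intro ε hε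
  obtain ⟨n₀, hn₀⟩ := Filter.eventually_atTop.1 <| tendsto_invAck.eventually <|
    (Filter.eventually_ge_atTop 3).and (eventually_mul_rpow_rpow_le hε (32 * Real.exp 32) 216)
  refine ⟨n₀, ?_⟩
  rintro _ hn ι _ rfl P hP hlt
  obtain ⟨hk, hK⟩ := hn₀ _ hn
  have hk₁ : (1 : ℝ) ≤ invAck (Fintype.card ι) := by exact_mod_cast (by omega : 1 ≤ _)
  rw [Real.rpow_mul_natCast (by positivity)]
  exact card_le_pow_of_alphaHier_le_three hP hlt hk (alphaHier_invAck_le_three _)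
    (Real.one_le_rpow hk₁ (by linarith)) hK

end Recursion

section Permutations

open scoped Finset

variable {n k : ℕ}

/-- The permutations of `P` as functions into `ℕ`, the setting in which values are contracted and
positions are deleted. -/
def valueFamily (P : Finset (Equiv.Perm (Fin n))) : Finset (Fin n → ℕ) :=
  P.image fun π x ↦ (π x : ℕ)

lemma card_valueFamily (P : Finset (Equiv.Perm (Fin n))) : #(valueFamily P) = #P :=
  Finset.card_image_of_injective _ fun _ _ h ↦ Equiv.ext fun x ↦ Fin.ext (congrFun h x)

lemma lt_of_mem_valueFamily {P : Finset (Equiv.Perm (Fin n))} {f : Fin n → ℕ}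
    (hf : f ∈ valueFamily P) (x : Fin n) : f x < n := by
  obtain ⟨π, -, rfl⟩ := Finset.mem_image.1 hf
  exact (π x).2

lemma VCDimLE.orderVCDimLE_valueFamily {P : Finset (Equiv.Perm (Fin n))} (hP : VCDimLE n k P) :
    OrderVCDimLE k (valueFamily P) := by
  intro e he hshatter
  have hmono : StrictMono (e ∘ Tuple.sort e) :=
    (Tuple.monotone_sort e).strictMono_of_injective (he.comp (Tuple.sort e).injective)
  refine hP _ ⟨hmono, fun σ ↦ ?_⟩
  obtain ⟨_, hf, hσ⟩ := hshatter ((Tuple.sort e).symm.trans σ)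
  obtain ⟨π, hπ, rfl⟩ := Finset.mem_image.1 hf
  have hstrict : StrictMono (π ∘ e ∘ Tuple.sort e ∘ σ.symm) := fun i j hij ↦
    hσ (Tuple.sort e (σ.symm i)) (Tuple.sort e (σ.symm j)) (by simpa using hij)
  refine ⟨π, hπ, fun i j ↦ ?_⟩
  simpa using (hstrict.lt_iff_lt (a := σ i) (b := σ j)).symm

end Permutations

/-- For every `ε > 0` there exists `n₀` such that for every `n ≥ n₀`,
every family of `n`-permutations with VC-dimension at most 3 has size at most
`α(n) ^ ((4+ε)·n)`. -/
theorem r3_upper_bound :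
    ∀ ε : ℝ, 0 < ε → ∃ n₀ : ℕ, ∀ n : ℕ, n₀ ≤ n →
      ∀ P : Finset (Equiv.Perm (Fin n)), VCDimLE n 3 P →
        (P.card : ℝ) ≤ (invAck n : ℝ) ^ ((4 + ε) * (n : ℝ)) := by
 
  intro ε hε
  obtain ⟨n₀, hn₀⟩ := r3_upper_bound_general ε hε
  exact ⟨n₀, fun n hn P hP ↦ card_valueFamily P ▸ hn₀ n hn (Fintype.card_fin n) (valueFamily P)
    hP.orderVCDimLE_valueFamily fun _ ↦ lt_of_mem_valueFamily⟩
end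

section
/- There exists a constant C such that for every integer n ≥ 1, the maximum size r₄(n) of a family of n-permutations with VC-dimension at most 4 satisfies r₄(n) ≤ 2^{n·(2α(n) + 3 log₂ α(n) + C)}. -/
/-!
A `(0,1)`-matrix on `p` rows with enough ones in each column and without a `5`-formation on `r`
columns has `O(p)` columns. This is proved by recursion: cut the rows into blocks. A column
meeting few blocks either lies in one block, where induction on the number of rows applies, or has
many ones in one block and further ones above or below it, so that its part in that block is
covered by the bound for shorter formations. Columns meeting many blocks are bounded by contracting
the blocks. With about `2 ^ α(p)` ones per column, the constant does not depend on `p`.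

Let now `F` be a family of functions on `n` positions that orders no five positions in all `5!`
ways. By a Sauer-type argument, `F` has at most `t ^ n` times as many members as there are boxes
with sides of size `t`, over any set of positions, all of whose points are restrictions of members
of `F`. If the dimension of such a box is too large compared to the number of values, its sides,
read as columns, contain a `5`-formation on `5` columns, and hence `F` orders these five positions
in all ways. Grouping the values into blocks makes the number of values, and thus the dimension of
the boxes, smaller than `n` by a large factor, at the price of a factor exponential in `n`; then
the number of boxes is bounded by induction.
-/

namespace PermVC

open Finset

/-! ### Formations -/

section Formations

variable {ι : Type*} {r s w p L : ℕ} {S : ι → Finset ℕ} {U : Finset ι}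

/-- The columns in `T` of the `(0,1)`-matrix whose column `j` has its `1`-entries in the rows
`S j` contain an `s`-formation: the rows split into `s` consecutive intervals each meeting every
column of `T`. The intervals are the fibers over `0, …, s - 1` of a monotone map. -/
def IsFormation (s : ℕ) (S : ι → Finset ℕ) (T : Finset ι) : Prop :=
  ∃ g : ℕ → ℕ, Monotone g ∧ ∀ j ∈ T, ∀ i < s, ∃ x ∈ S j, g x = i

/-- No `r` of the columns in `U` contain an `s`-formation. -/
def FormationFree (r s : ℕ) (S : ι → Finset ℕ) (U : Finset ι) : Prop :=
  ∀ T ⊆ U, #T = r → ¬ IsFormation s S T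

/-- The extremal bound at the heart of the argument: a matrix on a set `V` of at most `p` rows,
with at least `w` ones in each column and without an `s`-formation on `r` columns, has at most
`L * #V` columns. -/
def ColumnBound (ι : Type*) (r s w p L : ℕ) : Prop :=
  ∀ (U : Finset ι) (S : ι → Finset ℕ) (V : Finset ℕ), #V ≤ p →
    (∀ j ∈ U, S j ⊆ V ∧ w ≤ #(S j)) → FormationFree r s S U → #U ≤ L * #V

lemma FormationFree.subset {U' : Finset ι} (h : FormationFree r s S U) (hU : U' ⊆ U) :
    FormationFree r s S U' :=
  fun T hT ↦ h T (hT.trans hU)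

lemma FormationFree.mono {S' : ι → Finset ℕ} (h : FormationFree r s S U)
    (hS : ∀ j ∈ U, S' j ⊆ S j) : FormationFree r s S' U := by
  rintro T hTU hT ⟨g, hg, hgT⟩
  refine h T hTU hT ⟨g, hg, fun j hj i hi ↦ ?_⟩
  obtain ⟨x, hx, hxi⟩ := hgT j hj i hi
  exact ⟨x, hS j (hTU hj) hx, hxi⟩

lemma FormationFree.image {γ : ℕ → ℕ} (hγ : Monotone γ) (h : FormationFree r s S U) :
    FormationFree r s (fun j ↦ (S j).image γ) U := by
  rintro T hTU hT ⟨g, hg, hgT⟩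
  refine h T hTU hT ⟨g ∘ γ, hg.comp hγ, fun j hj i hi ↦ ?_⟩
  obtain ⟨y, hy, hyi⟩ := hgT j hj i hi
  obtain ⟨x, hx, rfl⟩ := mem_image.mp hy
  exact ⟨x, hx, hyi⟩

lemma FormationFree.filter_le {γ : ℕ → ℕ} (hγ : Monotone γ) {i : ℕ}
    (h : FormationFree r (s + 1) S U) (hU : ∀ j ∈ U, ∃ x ∈ S j, i < γ x) :
    FormationFree r s (fun j ↦ {x ∈ S j | γ x ≤ i}) U := by
  rintro T hTU hT ⟨g, hg, hgT⟩
  refine h T hTU hT ⟨fun x ↦ if γ x ≤ i then min (g x) (s - 1) else s, fun x y hxy ↦ ?_,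
    fun j hj l hl ↦ ?_⟩
  · have := hγ hxy
    have := hg hxy
    dsimp only
    split_ifs <;> omega
  · rcases Nat.lt_succ_iff_lt_or_eq.mp hl with hl | rfl
    · obtain ⟨x, hx, hxl⟩ := hgT j hj l hl
      obtain ⟨hxS, hxi⟩ := mem_filter.mp hx
      exact ⟨x, hxS, by dsimp only; rw [if_pos hxi]; omega⟩
    · obtain ⟨x, hxS, hxi⟩ := hU j (hTU hj)
      exact ⟨x, hxS, if_neg hxi.not_ge⟩

lemma FormationFree.filter_ge {γ : ℕ → ℕ} (hγ : Monotone γ) {i : ℕ}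
    (h : FormationFree r (s + 1) S U) (hU : ∀ j ∈ U, ∃ x ∈ S j, γ x < i) :
    FormationFree r s (fun j ↦ {x ∈ S j | i ≤ γ x}) U := by
  rintro T hTU hT ⟨g, hg, hgT⟩
  refine h T hTU hT ⟨fun x ↦ if i ≤ γ x then g x + 1 else 0, fun x y hxy ↦ ?_, fun j hj l hl ↦ ?_⟩
  · have := hγ hxy
    have := hg hxy
    dsimp only
    split_ifs <;> omega
  · rcases l with _ | l
    · obtain ⟨x, hxS, hxi⟩ := hU j (hTU hj)
      exact ⟨x, hxS, if_neg hxi.not_ge⟩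
    · obtain ⟨x, hx, hxl⟩ := hgT j hj l (by omega)
      obtain ⟨hxS, hxi⟩ := mem_filter.mp hx
      exact ⟨x, hxS, by simp only [if_pos hxi, hxl]⟩

lemma FormationFree.filter_eq {γ : ℕ → ℕ} (hγ : Monotone γ) {i : ℕ}
    (h : FormationFree r (s + 2) S U) (hlt : ∀ j ∈ U, ∃ x ∈ S j, γ x < i)
    (hgt : ∀ j ∈ U, ∃ x ∈ S j, i < γ x) :
    FormationFree r s (fun j ↦ {x ∈ S j | γ x = i}) U := by
  refine ((h.filter_le hγ hgt).filter_ge hγ (i := i) fun j hj ↦ ?_).mono fun j _ x hx ↦ ?_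
  · obtain ⟨x, hx, hxi⟩ := hlt j hj
    exact ⟨x, mem_filter.mpr ⟨hx, hxi.le⟩, hxi⟩
  · obtain ⟨hxS, rfl⟩ := mem_filter.mp hx
    exact mem_filter.mpr ⟨mem_filter.mpr ⟨hxS, le_rfl⟩, le_rfl⟩

lemma ColumnBound.mono {w' p' L' : ℕ} (h : ColumnBound ι r s w p L) (hw : w ≤ w') (hp : p' ≤ p)
    (hL : L ≤ L') : ColumnBound ι r s w' p' L' :=
  fun U S V hV hS hF ↦
    (h U S V (hV.trans hp) (fun j hj ↦ ⟨(hS j hj).1, hw.trans (hS j hj).2⟩) hF).trans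
      (Nat.mul_le_mul_right _ hL)

lemma ColumnBound.zero_of_lt (h : p < w) : ColumnBound ι r s w p 0 := by
  intro U S V hV hS _
  have hU : U = ∅ := eq_empty_of_forall_notMem fun j hj ↦ by
    have := card_le_card (hS j hj).1
    have := (hS j hj).2
    omega
  simp [hU]

/-- If each column is cut into `s` intervals by a map depending only on one of its rows, then `r`
columns cannot share that row. -/
lemma ColumnBound.of_pivot (cut : ℕ → ℕ → ℕ) (hcut : ∀ x, Monotone (cut x))
    (h : ∀ A : Finset ℕ, w ≤ #A → ∃ x ∈ A, ∀ i < s, ∃ y ∈ A, cut x y = i) :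
    ColumnBound ι r s w p (r - 1) := by
  intro U S V _ hS hF
  choose! pivot hpivot hpivot_cut using fun j (hj : j ∈ U) ↦ h (S j) (hS j hj).2
  refine card_le_mul_card_image_of_maps_to (fun j hj ↦ (hS j hj).1 (hpivot j hj)) _ fun x _ ↦ ?_
  by_contra! hlt
  obtain ⟨T, hTx, hT⟩ := exists_subset_card_eq (show r ≤ #{j ∈ U | pivot j = x} by omega)
  have hTU : T ⊆ U := hTx.trans (filter_subset _ _)
  refine hF T hTU hT ⟨cut x, hcut x, fun j hj ↦ ?_⟩
  obtain rfl : pivot j = x := (mem_filter.mp (hTx hj)).2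
  exact hpivot_cut j (hTU hj)

lemma columnBound_two_two : ColumnBound ι r 2 2 p (r - 1) := by
  refine .of_pivot (fun x y ↦ if y ≤ x then 0 else 1) (fun x y z hyz ↦ ?_) fun A hA ↦ ?_
  · dsimp only
    split_ifs <;> omega
  · have hf := A.orderEmbOfCardLe_mem hA
    have h01 : A.orderEmbOfCardLe hA 0 < A.orderEmbOfCardLe hA 1 := by simp
    refine ⟨_, hf 0, fun i hi ↦ ⟨_, hf ⟨i, hi⟩, ?_⟩⟩
    interval_cases i
    · exact if_pos le_rfl
    · exact if_neg h01.not_ge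

lemma columnBound_three_three : ColumnBound ι r 3 3 p (r - 1) := by
  refine .of_pivot (fun x y ↦ if y < x then 0 else if y ≤ x then 1 else 2)
    (fun x y z hyz ↦ ?_) fun A hA ↦ ?_
  · dsimp only
    split_ifs <;> omega
  · have hf := A.orderEmbOfCardLe_mem hA
    have h01 : A.orderEmbOfCardLe hA 0 < A.orderEmbOfCardLe hA 1 := by simp
    have h12 : A.orderEmbOfCardLe hA 1 < A.orderEmbOfCardLe hA 2 := by simp
    refine ⟨_, hf 1, fun i hi ↦ ⟨_, hf ⟨i, hi⟩, ?_⟩⟩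
    interval_cases i
    · exact if_pos h01
    · simp
    · exact (if_neg h12.not_gt).trans (if_neg h12.not_ge)

end Formations

/-! ### The recursion over blocks of rows -/

section Blocks

/-- The index of the block containing the row `x` when the rows of `V` are cut, in increasing
order, into consecutive blocks of `p` rows. -/
def blockIndex (V : Finset ℕ) (p x : ℕ) : ℕ :=
  Nat.count (· ∈ V) x / p

lemma blockIndex_monotone (V : Finset ℕ) (p : ℕ) : Monotone (blockIndex V p) :=
  fun _ _ h ↦ Nat.div_le_div_right (Nat.count_monotone _ h)

lemma blockIndex_lt {V : Finset ℕ} {p q x : ℕ} (hx : x ∈ V) (hV : #V ≤ p * q) :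
    blockIndex V p x < q := by
  have hrank : Nat.count (· ∈ V) x < #V := by
    simpa using Nat.count_lt_card (p := (· ∈ V)) V.finite_toSet hx
  exact Nat.div_lt_of_lt_mul (hrank.trans_le hV)

lemma card_block_le (V : Finset ℕ) {p : ℕ} (hp : 0 < p) (i : ℕ) :
    #{x ∈ V | blockIndex V p x = i} ≤ p := by
  calc #{x ∈ V | blockIndex V p x = i} ≤ #(Ico (i * p) ((i + 1) * p)) := by
        refine card_le_card_of_injOn (Nat.count (· ∈ V)) (fun x hx ↦ ?_) fun x hx y hy h ↦ ?_
        · have hxi : Nat.count (· ∈ V) x / p = i := (mem_filter.mp hx).2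
          rw [coe_Ico, Set.mem_Ico, ← Nat.le_div_iff_mul_le hp, ← Nat.div_lt_iff_lt_mul hp]
          omega
        · exact Nat.count_injective (mem_filter.mp hx).1 (mem_filter.mp hy).1 h
    _ = p := by rw [Nat.card_Ico, add_one_mul, Nat.add_sub_cancel_left]

/-- One of the reasons for charging the column `A` to the block `i`: it lies in that block, or it
has more than `a` entries there and an entry on one side of it, or more than `b` entries there and
entries on both sides. -/
def Dominates {α β : Type*} [LinearOrder β] (γ : α → β) (i : β) (a b : ℕ) (A : Finset α) : Prop :=
  (∀ x ∈ A, γ x = i) ∨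
  (a < #{x ∈ A | γ x = i} ∧ ∃ x ∈ A, i < γ x) ∨
  (a < #{x ∈ A | γ x = i} ∧ ∃ x ∈ A, γ x < i) ∨
  (b < #{x ∈ A | γ x = i} ∧ (∃ x ∈ A, γ x < i) ∧ ∃ x ∈ A, i < γ x)

lemma card_le_two_mul_add_mul_card_image_sub {α β : Type*} [DecidableEq β] {γ : α → β} {a b : ℕ}
    {A : Finset α} {lo hi : β} (hlo : lo ∈ A.image γ) (hhi : hi ∈ A.image γ) (hne : hi ≠ lo)
    (hcard_lo : #{x ∈ A | γ x = lo} ≤ a) (hcard_hi : #{x ∈ A | γ x = hi} ≤ a)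
    (hcard : ∀ i ∈ A.image γ, i ≠ lo → i ≠ hi → #{x ∈ A | γ x = i} ≤ b) :
    #A ≤ 2 * a + b * (#(A.image γ) - 2) := by
  have hhi' : hi ∈ (A.image γ).erase lo := mem_erase.mpr ⟨hne, hhi⟩
  have hmid : ∑ i ∈ ((A.image γ).erase lo).erase hi, #{x ∈ A | γ x = i} ≤
      b * (#(A.image γ) - 2) := by
    have := sum_le_card_nsmul (((A.image γ).erase lo).erase hi) (fun i ↦ #{x ∈ A | γ x = i}) b
      fun i hi ↦ by
        simp only [mem_erase] at hi
        exact hcard i hi.2.2 hi.2.1 hi.1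
    rwa [card_erase_of_mem hhi', card_erase_of_mem hlo, smul_eq_mul, mul_comm] at this
  rw [card_eq_sum_card_image γ A, ← add_sum_erase _ _ hlo, ← add_sum_erase _ _ hhi']
  omega

lemma exists_dominates {α β : Type*} [LinearOrder β] (γ : α → β) {a b c : ℕ} {A : Finset α}
    (hA : 2 * a + b * c + 1 ≤ #A) (hγ : #(A.image γ) < c + 3) :
    ∃ i ∈ A.image γ, Dominates γ i a b A := by
  by_contra! hnone
  simp only [Dominates, not_or, not_and] at hnone
  set D := A.image γ with hD
  have hDne : D.Nonempty := by
    rw [hD, image_nonempty]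
    exact card_pos.mp (by omega)
  set lo := D.min' hDne
  set hi := D.max' hDne
  have hlo : lo ∈ D := D.min'_mem hDne
  have hhi : hi ∈ D := D.max'_mem hDne
  obtain ⟨x, hx, hxlo⟩ := mem_image.mp hlo
  obtain ⟨y, hy, hyhi⟩ := mem_image.mp hhi
  have hlt : lo < hi := by
    by_contra hle
    refine (hnone lo hlo).1 fun z hz ↦ ?_
    have hzD := mem_image_of_mem γ hz
    exact le_antisymm ((D.le_max' _ hzD).trans (not_lt.mp hle)) (D.min'_le _ hzD)
  have hcard_lo : #{x ∈ A | γ x = lo} ≤ a := by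
    by_contra h
    exact (hnone lo hlo).2.1 (by omega) ⟨y, hy, by rwa [hyhi]⟩
  have hcard_hi : #{x ∈ A | γ x = hi} ≤ a := by
    by_contra h
    exact (hnone hi hhi).2.2.1 (by omega) ⟨x, hx, by rwa [hxlo]⟩
  have hcard_mid : ∀ i ∈ D, i ≠ lo → i ≠ hi → #{x ∈ A | γ x = i} ≤ b := by
    intro i hiD hi_lo hi_hi
    by_contra h
    exact (hnone i hiD).2.2.2 (by omega)
      ⟨x, hx, hxlo ▸ lt_of_le_of_ne (D.min'_le i hiD) (Ne.symm hi_lo)⟩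
      ⟨y, hy, hyhi ▸ lt_of_le_of_ne (D.le_max' i hiD) hi_hi⟩
  have := card_le_two_mul_add_mul_card_image_sub hlo hhi hlt.ne' hcard_lo hcard_hi hcard_mid
  rw [← hD] at this
  have : b * (#D - 2) ≤ b * c := Nat.mul_le_mul_left _ (by omega)
  omega

variable {ι : Type*} {r s a b c w p q L L₁ L₂ L₃ : ℕ} {U : Finset ι} {S : ι → Finset ℕ}
  {V : Finset ℕ}

lemma card_le_of_forall_dominates {γ : ℕ → ℕ} (hγ : Monotone γ) {i : ℕ}
    (h : ColumnBound ι r (s + 2) w p L) (h₁ : ColumnBound ι r (s + 1) (a + 1) p L₁)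
    (h₂ : ColumnBound ι r s (b + 1) p L₂) (hV : #{x ∈ V | γ x = i} ≤ p)
    (hS : ∀ j ∈ U, S j ⊆ V ∧ w ≤ #(S j)) (hF : FormationFree r (s + 2) S U)
    (hdom : ∀ j ∈ U, Dominates γ i a b (S j)) :
    #U ≤ (L + 2 * L₁ + L₂) * #{x ∈ V | γ x = i} := by
  classical
  set W : Finset ℕ := {x ∈ V | γ x = i}
  let S' : ι → Finset ℕ := fun j ↦ {x ∈ S j | γ x = i}
  have hS' : ∀ j ∈ U, S' j ⊆ W := fun j hj ↦ filter_subset_filter _ (hS j hj).1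
  let inside : Finset ι := {j ∈ U | ∀ x ∈ S j, γ x = i}
  let above : Finset ι := {j ∈ U | a < #(S' j) ∧ ∃ x ∈ S j, i < γ x}
  let below : Finset ι := {j ∈ U | a < #(S' j) ∧ ∃ x ∈ S j, γ x < i}
  let across : Finset ι := {j ∈ U | b < #(S' j) ∧ (∃ x ∈ S j, γ x < i) ∧ ∃ x ∈ S j, i < γ x}
  have hinside : #inside ≤ L * #W := by
    refine h _ S W hV (fun j hj ↦ ?_) (hF.subset (filter_subset _ _))
    obtain ⟨hjU, hj⟩ := mem_filter.mp hj
    exact ⟨fun x hx ↦ mem_filter.mpr ⟨(hS j hjU).1 hx, hj x hx⟩, (hS j hjU).2⟩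
  have habove : #above ≤ L₁ * #W := by
    refine h₁ _ S' W hV (fun j hj ↦ ?_) (((hF.subset (filter_subset _ _)).filter_le hγ (i := i)
      fun j hj ↦ (mem_filter.mp hj).2.2).mono fun j _ ↦ ?_)
    · exact ⟨hS' j (mem_filter.mp hj).1, (mem_filter.mp hj).2.1⟩
    · exact monotone_filter_right _ fun x _ hx ↦ hx.le
  have hbelow : #below ≤ L₁ * #W := by
    refine h₁ _ S' W hV (fun j hj ↦ ?_) (((hF.subset (filter_subset _ _)).filter_ge hγ (i := i)
      fun j hj ↦ (mem_filter.mp hj).2.2).mono fun j _ ↦ ?_)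
    · exact ⟨hS' j (mem_filter.mp hj).1, (mem_filter.mp hj).2.1⟩
    · exact monotone_filter_right _ fun x _ hx ↦ hx.ge
  have hacross : #across ≤ L₂ * #W := by
    refine h₂ _ S' W hV (fun j hj ↦ ?_) ((hF.subset (filter_subset _ _)).filter_eq hγ
      (fun j hj ↦ (mem_filter.mp hj).2.2.1) fun j hj ↦ (mem_filter.mp hj).2.2.2)
    exact ⟨hS' j (mem_filter.mp hj).1, (mem_filter.mp hj).2.1⟩
  have hcover : U ⊆ inside ∪ (above ∪ (below ∪ across)) := by
    intro j hj
    simpa only [inside, above, below, across, mem_union, mem_filter, hj, true_and, Dominates, S']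
      using hdom j hj
  have hcard : #U ≤ #inside + (#above + (#below + #across)) := by
    grw [hcover, card_union_le, card_union_le, card_union_le]
  linarith

/-- Columns meeting at least `c + 3` blocks are bounded by contracting the blocks; the others are
charged to a block dominating them. -/
lemma ColumnBound.card_le_of_blocks (hp : 0 < p) (hw : 2 * a + b * c + 1 ≤ w)
    (h : ColumnBound ι r (s + 2) w p L) (h₁ : ColumnBound ι r (s + 1) (a + 1) p L₁)
    (h₂ : ColumnBound ι r s (b + 1) p L₂) (h₃ : ColumnBound ι r (s + 2) (c + 3) q L₃)
    (hV : #V ≤ p * q) (hS : ∀ j ∈ U, S j ⊆ V ∧ w ≤ #(S j)) (hF : FormationFree r (s + 2) S U) :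
    #U ≤ (L + 2 * L₁ + L₂) * #V + L₃ * q := by
  classical
  set γ := blockIndex V p
  have hγ : Monotone γ := blockIndex_monotone V p
  have hγq : ∀ x ∈ V, γ x ∈ range q := fun x hx ↦ mem_range.mpr (blockIndex_lt hx hV)
  let spread : Finset ι := {j ∈ U | c + 3 ≤ #((S j).image γ)}
  let charged : ℕ → Finset ι := fun i ↦ {j ∈ U | Dominates γ i a b (S j)}
  have hspread : #spread ≤ L₃ * q := by
    have := h₃ spread (fun j ↦ (S j).image γ) (range q) (card_range q).le (fun j hj ↦ ?_)
      ((hF.subset (filter_subset _ _)).image hγ)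
    · rwa [card_range] at this
    · obtain ⟨hjU, hj⟩ := mem_filter.mp hj
      exact ⟨image_subset_iff.mpr fun x hx ↦ hγq x ((hS j hjU).1 hx), hj⟩
  have hcharged (i : ℕ) : #(charged i) ≤ (L + 2 * L₁ + L₂) * #{x ∈ V | γ x = i} :=
    card_le_of_forall_dominates hγ h h₁ h₂ (card_block_le V hp i)
      (fun j hj ↦ hS j (mem_filter.mp hj).1) (hF.subset (filter_subset _ _))
      fun j hj ↦ (mem_filter.mp hj).2
  have hcover : U ⊆ spread ∪ (range q).biUnion charged := by
    intro j hj
    by_cases hjs : c + 3 ≤ #((S j).image γ)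
    · exact mem_union_left _ (mem_filter.mpr ⟨hj, hjs⟩)
    · obtain ⟨i, hi, hdom⟩ := exists_dominates γ (hw.trans (hS j hj).2) (not_le.mp hjs)
      obtain ⟨x, hx, rfl⟩ := mem_image.mp hi
      exact mem_union_right _ (mem_biUnion.mpr
        ⟨γ x, hγq x ((hS j hj).1 hx), mem_filter.mpr ⟨hj, hdom⟩⟩)
  have hV_sum : #V = ∑ i ∈ range q, #{x ∈ V | γ x = i} := card_eq_sum_card_fiberwise hγq
  calc #U ≤ #spread + ∑ i ∈ range q, #(charged i) := by
        grw [hcover, card_union_le, card_biUnion_le]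
    _ ≤ L₃ * q + ∑ i ∈ range q, (L + 2 * L₁ + L₂) * #{x ∈ V | γ x = i} := by
        gcongr with i
        exact hcharged i
    _ = (L + 2 * L₁ + L₂) * #V + L₃ * q := by rw [← mul_sum, ← hV_sum, add_comm]

lemma ColumnBound.double (hp : 0 < p) (hw : 2 * a + 1 ≤ w) (h : ColumnBound ι r (s + 2) w p L)
    (h₁ : ColumnBound ι r (s + 1) (a + 1) p L₁) (h₂ : ColumnBound ι r s (b + 1) p L₂) :
    ColumnBound ι r (s + 2) w (p * 2) (L + 2 * L₁ + L₂) := by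
  intro U S V hV hS hF
  simpa using card_le_of_blocks (c := 0) hp (by omega) h h₁ h₂ (.zero_of_lt (by omega)) hV hS hF

end Blocks

/-! ### Four- and five-formations -/

section Thresholds

/-- A map of square-root growth, chosen so that `(damp p + 1) ^ 2 ≤ p / 2` for
`p ≥ 8`. -/
def damp (p : ℕ) : ℕ :=
  Nat.sqrt (p / 8)

lemma one_le_damp {p : ℕ} (hp : 8 ≤ p) : 1 ≤ damp p :=
  Nat.sqrt_pos.mpr (by omega)

lemma two_mul_damp_add_one_sq_le {p : ℕ} (hp : 8 ≤ p) : 2 * (damp p + 1) ^ 2 ≤ p := by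
  have hsq : damp p ^ 2 ≤ p / 8 := Nat.sqrt_le' _
  have : (damp p + 1) ^ 2 ≤ (2 * damp p) ^ 2 := by
    gcongr
    linarith [one_le_damp hp]
  rw [mul_pow] at this
  omega

variable {ι : Type*} {r s a b c w p p' L L₁ L₂ C : ℕ}

lemma ColumnBound.extend (hp : 8 ≤ p) (hw : 2 * a + b * c + 1 ≤ w)
    (h : ColumnBound ι r (s + 2) w p L) (h₁ : ColumnBound ι r (s + 1) (a + 1) p L₁)
    (h₂ : ColumnBound ι r s (b + 1) p L₂)
    (h₃ : ColumnBound ι r (s + 2) (c + 3) p' (C * (damp p + 1) ^ 2)) :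
    ColumnBound ι r (s + 2) w p' (L + 2 * L₁ + L₂ + C) := by
  intro U S V hV hS hF
  rcases le_or_gt #V p with hVp | hVp
  · calc #U ≤ L * #V := h U S V hVp hS hF
      _ ≤ (L + 2 * L₁ + L₂ + C) * #V := by gcongr; omega
  · have hdiv : p * (#V / p) ≤ #V := Nat.mul_div_le _ _
    have hq_le : #V / p + 1 ≤ #V := by
      have := Nat.mul_le_mul_right (#V / p) hp
      omega
    have hVq : #V ≤ p * (#V / p + 1) := (Nat.lt_mul_div_succ _ (by omega)).le
    have hdamp : (damp p + 1) ^ 2 * (#V / p + 1) ≤ #V := by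
      have := Nat.mul_le_mul_right (#V / p + 1) (two_mul_damp_add_one_sq_le hp)
      linarith
    calc #U ≤ (L + 2 * L₁ + L₂) * #V + C * (damp p + 1) ^ 2 * (#V / p + 1) :=
          card_le_of_blocks (by omega) hw h h₁ h₂ (h₃.mono le_rfl (hq_le.trans hV) le_rfl)
            hVq hS hF
      _ ≤ (L + 2 * L₁ + L₂) * #V + C * #V := by
          rw [mul_assoc]
          gcongr
      _ = (L + 2 * L₁ + L₂ + C) * #V := (add_mul _ _ _).symm

lemma columnBound_four_five (H : ℕ) : ColumnBound ι r 4 5 (2 ^ H) (3 * (r - 1) * H) := by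
  induction H with
  | zero => exact .zero_of_lt (by norm_num)
  | succ H ih =>
    rw [pow_succ]
    exact (ih.double (a := 2) (b := 1) (by positivity) le_rfl columnBound_three_three
      columnBound_two_two).mono le_rfl le_rfl (by linarith)

lemma columnBound_five_nine (H : ℕ) : ColumnBound ι r 5 9 (2 ^ H) (4 * (r - 1) * H ^ 2) := by
  induction H with
  | zero => exact .zero_of_lt (by norm_num)
  | succ H ih =>
    rw [pow_succ]
    exact (ih.double (a := 4) (b := 2) (by positivity) le_rfl (columnBound_four_five H)
      columnBound_three_three).mono le_rfl le_rfl (by nlinarith)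

/-- An Ackermann-type hierarchy: a number of rows up to which the column bounds at level `d` hold
with a constant polynomial in `h`. -/
def threshold : ℕ → ℕ → ℕ
  | 0, h => 2 ^ (20 + h)
  | _ + 1, 0 => 2 ^ 20
  | d + 1, h + 1 => threshold d (damp (threshold (d + 1) h))
  termination_by d h => (d, h)

lemma two_pow_twenty_le_threshold (d h : ℕ) : 2 ^ 20 ≤ threshold d h := by
  induction d generalizing h with
  | zero =>
    rw [threshold]
    exact Nat.pow_le_pow_right two_pos (by omega)
  | succ d ih =>
    cases h with
    | zero => rw [threshold]
    | succ h =>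
      rw [threshold]
      exact ih _

/-- The number of ones per column needed at level `d` of the bound on five-formations. -/
def fiveWeight : ℕ → ℕ
  | 0 => 9
  | d + 1 => 2 * fiveWeight d + 4 * d + 7

lemma fiveWeight_add (d : ℕ) : fiveWeight d + 4 * d + 11 = 20 * 2 ^ d := by
  induction d with
  | zero => rfl
  | succ d ih =>
    rw [fiveWeight, pow_succ]
    linarith

lemma nine_le_fiveWeight (d : ℕ) : 9 ≤ fiveWeight d := by
  induction d with
  | zero => rfl
  | succ d ih =>
    rw [fiveWeight]
    omega

lemma columnBound_four (d h : ℕ) :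
    ColumnBound ι r 4 (2 * d + 5) (threshold d h) (60 * (r - 1) * (h + 1)) := by
  induction d generalizing h with
  | zero =>
    rw [threshold]
    exact (columnBound_four_five _).mono le_rfl le_rfl (by nlinarith)
  | succ d ihd =>
    induction h with
    | zero =>
      rw [threshold]
      exact (columnBound_four_five 20).mono (by omega) le_rfl (by linarith)
    | succ h ihh =>
      have hp : 8 ≤ threshold (d + 1) h := by linarith [two_pow_twenty_le_threshold (d + 1) h]
      have hdamp := one_le_damp hp
      rw [threshold]
      refine (ihh.extend (a := 2) (b := 1) (c := 2 * d + 2) (C := 30 * (r - 1)) hp (by omega)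
        columnBound_three_three columnBound_two_two ((ihd _).mono le_rfl le_rfl ?_)).mono
        le_rfl le_rfl (by linarith)
      calc 60 * (r - 1) * (damp (threshold (d + 1) h) + 1)
          = 30 * (r - 1) * (2 * (damp (threshold (d + 1) h) + 1)) := by ring
        _ ≤ 30 * (r - 1) * (damp (threshold (d + 1) h) + 1) ^ 2 := by
          rw [sq]
          gcongr
          omega

lemma columnBound_five (d h : ℕ) :
    ColumnBound ι r 5 (fiveWeight d) (threshold d h) (1600 * (r - 1) * (h + 1) ^ 2) := by
  induction d generalizing h with
  | zero =>
    rw [threshold]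
    exact (columnBound_five_nine _).mono le_rfl le_rfl (by
      calc 4 * (r - 1) * (20 + h) ^ 2 ≤ 4 * (r - 1) * (20 * (h + 1)) ^ 2 := by gcongr; omega
        _ = 1600 * (r - 1) * (h + 1) ^ 2 := by ring)
  | succ d ihd =>
    have hd := nine_le_fiveWeight d
    induction h with
    | zero =>
      rw [threshold]
      exact (columnBound_five_nine 20).mono (nine_le_fiveWeight _) le_rfl (by linarith)
    | succ h ihh =>
      have hp : 8 ≤ threshold (d + 1) h := by linarith [two_pow_twenty_le_threshold (d + 1) h]
      rw [threshold]
      refine (ihh.extend (a := 2 * d + 6) (b := 2) (c := fiveWeight d - 3) (C := 1600 * (r - 1)) hp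
        (by rw [fiveWeight]; omega) (columnBound_four (d + 1) h) columnBound_three_three
        ((ihd _).mono (by omega) le_rfl le_rfl)).mono le_rfl le_rfl (by nlinarith)

end Thresholds

/-! ### The inverse Ackermann hierarchy -/

section InverseAckermann

lemma iterCount_lt {f : ℕ → ℕ} (hf : ∀ m, 2 ≤ m → f m < m) (F : ℕ) {m : ℕ} (hm : 0 < m) :
    iterCount f F m < m := by
  induction F generalizing m with
  | zero => exact hm
  | succ F ih =>
    rw [iterCount]
    split_ifs with hm1
    · exact hm
    · have := hf m (by omega)
      rcases (f m).eq_zero_or_pos with h0 | hpos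
      · have : iterCount f F (f m) = 0 := by rw [h0]; cases F <;> simp [iterCount]
        omega
      · have := ih hpos
        omega

lemma iterCount_congr {f : ℕ → ℕ} (hf : ∀ m, 2 ≤ m → f m < m) {F F' m : ℕ} (hF : m ≤ F)
    (hF' : m ≤ F') : iterCount f F m = iterCount f F' m := by
  induction F generalizing F' m with
  | zero =>
    obtain rfl : m = 0 := by omega
    cases F' <;> simp [iterCount]
  | succ F ih =>
    cases F' with
    | zero =>
      obtain rfl : m = 0 := by omega
      simp [iterCount]
    | succ F' =>
      rw [iterCount, iterCount]
      split_ifs with hm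
      · rfl
      · have := hf m (by omega)
        rw [ih (F' := F') (by omega) (by omega)]

lemma alphaHier_lt (d : ℕ) {m : ℕ} (hm : 2 ≤ m) : alphaHier (d + 1) m < m := by
  induction d generalizing m with
  | zero =>
    rw [alphaHier]
    omega
  | succ d ih => exact iterCount_lt (fun m hm ↦ ih hm) m (by omega)

lemma alphaHier_eq_one_add (d : ℕ) {m : ℕ} (hm : 2 ≤ m) :
    alphaHier (d + 2) m = 1 + alphaHier (d + 2) (alphaHier (d + 1) m) := by
  have hlt := alphaHier_lt d hm
  obtain ⟨m, rfl⟩ := Nat.exists_eq_add_of_lt (show 0 < m by omega)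
  rw [alphaHier, alphaHier, iterCount, if_neg (by omega),
    iterCount_congr (fun m hm ↦ alphaHier_lt d hm) (by omega) le_rfl]

lemma alphaHier_le_half (d m : ℕ) : alphaHier (d + 1) m ≤ (m + 1) / 2 := by
  induction d generalizing m with
  | zero => exact le_rfl
  | succ d ih =>
    rcases lt_or_ge m 2 with hm | hm
    · interval_cases m <;> simp [alphaHier, iterCount]
    · have := ih m
      change alphaHier (d + 2) m ≤ (m + 1) / 2
      rw [alphaHier_eq_one_add d hm]
      rcases (alphaHier (d + 1) m).eq_zero_or_pos with h0 | hpos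
      · rw [h0, show alphaHier (d + 2) 0 = 0 from rfl]
        omega
      · have : alphaHier (d + 2) (alphaHier (d + 1) m) < alphaHier (d + 1) m :=
          iterCount_lt (fun m hm ↦ alphaHier_lt d hm) _ hpos
        omega

lemma alphaHier_succ_lt {d m : ℕ} (h : 4 ≤ alphaHier (d + 1) m) :
    alphaHier (d + 2) m < alphaHier (d + 1) m := by
  have := alphaHier_le_half d m
  rw [alphaHier_eq_one_add d (by omega)]
  have : alphaHier (d + 2) (alphaHier (d + 1) m) ≤ _ := alphaHier_le_half (d + 1) _
  omega

lemma exists_alphaHier_le_three (m : ℕ) : ∃ k, 1 ≤ k ∧ alphaHier k m ≤ 3 := by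
  by_contra! h
  exact not_strictAnti_of_wellFoundedLT (fun d ↦ alphaHier (d + 1) m)
    (strictAnti_nat_of_succ_lt fun d ↦ alphaHier_succ_lt (h (d + 1) (by omega)))

lemma invAck_spec (m : ℕ) : 1 ≤ invAck m ∧ alphaHier (invAck m) m ≤ 3 :=
  Nat.sInf_mem (exists_alphaHier_le_three m)

lemma two_mul_le_damp_two_pow (h : ℕ) : 2 * h ≤ damp (2 ^ (20 + h)) := by
  have hsq : (2 * h) ^ 2 * 8 ≤ 2 ^ (20 + h) := by
    induction h with
    | zero => norm_num
    | succ h ih =>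
      have : h < 2 ^ h := Nat.lt_two_pow_self
      rw [pow_add] at ih ⊢
      rw [pow_succ 2 h]
      nlinarith
  exact Nat.le_sqrt'.mpr ((Nat.le_div_iff_mul_le (by norm_num)).mpr hsq)

lemma le_damp_threshold {d m h : ℕ} (hm : alphaHier (d + 1) m ≤ h) :
    m ≤ damp (threshold d h) := by
  induction d generalizing m h with
  | zero =>
    rw [alphaHier] at hm
    rw [threshold]
    exact le_trans (by omega) (two_mul_le_damp_two_pow h)
  | succ d ihd =>
    induction m using Nat.strong_induction_on generalizing h with
    | _ m ihm =>
      rcases lt_or_ge m 2 with hm1 | hm2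
      · have := one_le_damp (p := threshold (d + 1) h)
          (by linarith [two_pow_twenty_le_threshold (d + 1) h])
        omega
      · rw [alphaHier_eq_one_add d hm2, add_comm] at hm
        obtain ⟨h, rfl⟩ := Nat.exists_eq_add_of_le' (le_of_add_le_right hm)
        rw [threshold]
        exact ihd (ihm _ (alphaHier_lt d hm2) (Nat.le_of_add_le_add_right hm))

lemma le_threshold_invAck (n : ℕ) : n ≤ threshold (invAck n - 1) 3 := by
  obtain ⟨hpos, hle⟩ := invAck_spec n
  rw [← Nat.sub_add_cancel hpos] at hle
  exact (le_damp_threshold hle).trans ((Nat.sqrt_le_self _).trans (Nat.div_le_self _ _))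

end InverseAckermann

/-! ### A Sauer-type lemma for shattered boxes -/

section Trace

lemma le_add_choose {t : ℕ} (ht : 1 ≤ t) (x : ℕ) : x ≤ t + x.choose t := by
  obtain ⟨t, rfl⟩ := Nat.exists_eq_add_of_le' ht
  induction x with
  | zero => exact zero_le
  | succ x ih =>
    rw [Nat.choose_succ_succ']
    rcases lt_or_ge x t with hxt | hxt
    · omega
    · have := Nat.choose_pos hxt
      omega

lemma card_le_mul_card_image_fst_add {α β : Type*} [DecidableEq α] [DecidableEq β] {t : ℕ}
    (ht : 1 ≤ t) {D : Finset (β × α)} {R : Finset α} (hD : ∀ q ∈ D, q.2 ∈ R) :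
    #D ≤ t * #(D.image Prod.fst) +
      ∑ B ∈ R.powersetCard t, #{p ∈ D.image Prod.fst | ∀ b ∈ B, (p, b) ∈ D} := by
  let fiber (p : β) : Finset α := {b ∈ R | (p, b) ∈ D}
  have hfiber (p : β) : #{q ∈ D | q.1 = p} ≤ #(fiber p) := by
    refine card_le_card_of_injOn Prod.snd (fun q hq ↦ ?_) fun q hq q' hq' h ↦ ?_
    · obtain ⟨hqD, rfl⟩ := mem_filter.mp hq
      exact mem_filter.mpr ⟨hD q hqD, hqD⟩
    · exact Prod.ext ((mem_filter.mp hq).2.trans (mem_filter.mp hq').2.symm) h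
  have hchoose (p : β) :
      (#(fiber p)).choose t = #{B ∈ R.powersetCard t | ∀ b ∈ B, (p, b) ∈ D} := by
    rw [← card_powersetCard]
    congr 1
    ext B
    simp only [fiber, mem_powersetCard, mem_filter, subset_iff, forall_and]
    tauto
  calc #D = ∑ p ∈ D.image Prod.fst, #{q ∈ D | q.1 = p} := card_eq_sum_card_image _ _
    _ ≤ ∑ p ∈ D.image Prod.fst, (t + #{B ∈ R.powersetCard t | ∀ b ∈ B, (p, b) ∈ D}) := by
      refine sum_le_sum fun p _ ↦ ?_
      rw [← hchoose]
      exact (hfiber p).trans (le_add_choose ht _)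
    _ = _ := by
      rw [sum_add_distrib, sum_const, smul_eq_mul, mul_comm]
      congr 1
      exact sum_card_bipartiteAbove_eq_sum_card_bipartiteBelow fun p B ↦ ∀ b ∈ B, (p, b) ∈ D

variable {ι α : Type*} [DecidableEq α] {t : ℕ} {e : ι} {R : Finset α} {F : Finset (ι → α)}
  {E : Finset ι}

/-- The set of restrictions to the positions in `E` of the functions in `F`. -/
def trace (F : Finset (ι → α)) (E : Finset ι) : Finset (E → α) :=
  F.image E.restrict

lemma mem_trace {φ : E → α} : φ ∈ trace F E ↔ ∃ f ∈ F, E.restrict f = φ :=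
  mem_image

/-- The functions in `F` whose value at `e` can be replaced by any element of `B` without changing
the restriction to `E`. -/
def flexible (F : Finset (ι → α)) (E : Finset ι) (e : ι) (B : Finset α) : Finset (ι → α) :=
  {f ∈ F | ∀ b ∈ B, ∃ f' ∈ F, E.restrict f' = E.restrict f ∧ f' e = b}

lemma card_trace_insert_le [DecidableEq ι] (ht : 1 ≤ t)
    (hF : ∀ f ∈ F, ∀ x ∈ insert e E, f x ∈ R) :
    #(trace F (insert e E)) ≤
      t * #(trace F E) + ∑ B ∈ R.powersetCard t, #(trace (flexible F E e B) E) := by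
  set D : Finset ((E → α) × α) := F.image fun f ↦ (E.restrict f, f e) with hD
  have hcard : #(trace F (insert e E)) ≤ #D := by
    refine card_le_card_of_injOn (fun φ ↦ (fun x ↦ φ ⟨x, mem_insert_of_mem x.2⟩,
      φ ⟨e, mem_insert_self e E⟩)) (fun φ hφ ↦ ?_) fun φ _ φ' _ h ↦ ?_
    · obtain ⟨f, hf, rfl⟩ := mem_trace.mp hφ
      exact mem_image_of_mem _ hf
    · rw [Prod.mk.injEq] at h
      ext ⟨x, hx⟩
      rcases mem_insert.mp hx with rfl | hxE
      · exact h.2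
      · exact congrFun h.1 ⟨x, hxE⟩
  have hfst : D.image Prod.fst = trace F E := by
    rw [hD, image_image]
    rfl
  have hflex (B : Finset α) :
      ({p ∈ D.image Prod.fst | ∀ b ∈ B, (p, b) ∈ D} : Finset (E → α)) ⊆
        trace (flexible F E e B) E := by
    intro p hp
    obtain ⟨hpF, hpB⟩ := mem_filter.mp hp
    rw [hfst] at hpF
    obtain ⟨f, hf, rfl⟩ := mem_trace.mp hpF
    refine mem_trace.mpr ⟨f, mem_filter.mpr ⟨hf, fun b hb ↦ ?_⟩, rfl⟩
    simpa only [hD, mem_image, Prod.mk.injEq] using hpB b hb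
  refine hcard.trans ((card_le_mul_card_image_fst_add ht (R := R) fun q hq ↦ ?_).trans ?_)
  · obtain ⟨f, hf, rfl⟩ := mem_image.mp hq
    exact hF f hf e (mem_insert_self e E)
  · rw [hfst] at hflex ⊢
    gcongr with B
    exact hflex B

end Trace

section Boxes

variable {ι α : Type*} [Fintype ι] [DecidableEq ι] [DecidableEq α] {t : ℕ} {e : ι} {R : Finset α}
  {F : Finset (ι → α)} {E J : Finset ι}

/-- The boxes over the positions `J`, with sides of size `t` taken from the alphabet `R`, all of
whose points are restrictions of functions in `F`. A box has the empty side outside `J`. -/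
def shatteredBoxes (t : ℕ) (R : Finset α) (F : Finset (ι → α)) (J : Finset ι) :
    Finset (ι → Finset α) :=
  {A ∈ Fintype.piFinset fun x ↦ if x ∈ J then R.powersetCard t else {∅} |
    Fintype.piFinset (fun x : J ↦ A x) ⊆ trace F J}

lemma mem_shatteredBoxes {A : ι → Finset α} :
    A ∈ shatteredBoxes t R F J ↔ (∀ x ∈ J, A x ⊆ R ∧ #(A x) = t) ∧ (∀ x ∉ J, A x = ∅) ∧
      ∀ φ : J → α, (∀ x : J, φ x ∈ A x) → φ ∈ trace F J := by
  rw [shatteredBoxes, mem_filter, subset_iff, ← and_assoc]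
  simp only [Fintype.mem_piFinset]
  refine and_congr_left fun _ ↦ ⟨fun h ↦ ⟨fun x hx ↦ ?_, fun x hx ↦ ?_⟩, fun h x ↦ ?_⟩
  · simpa only [if_pos hx, mem_powersetCard] using h x
  · simpa only [if_neg hx, mem_singleton] using h x
  · split_ifs with hx
    · exact mem_powersetCard.mpr (h.1 x hx)
    · exact mem_singleton.mpr (h.2 x hx)

lemma card_trace_empty_le : #(trace F ∅) ≤ #(shatteredBoxes t R F ∅) := by
  rcases F.eq_empty_or_nonempty with rfl | ⟨f, hf⟩
  · simp [trace]
  · have hbox : (fun _ ↦ ∅) ∈ shatteredBoxes t R F ∅ :=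
      mem_shatteredBoxes.mpr ⟨by simp, by simp,
        fun φ _ ↦ mem_trace.mpr ⟨f, hf, Subsingleton.elim _ _⟩⟩
    exact (card_le_one_of_subsingleton _).trans (card_pos.mpr ⟨_, hbox⟩)

lemma update_mem_shatteredBoxes (he : e ∉ E) (hJ : J ⊆ E) {A : ι → Finset α} {B : Finset α}
    (hB : B ∈ R.powersetCard t) (hA : A ∈ shatteredBoxes t R (flexible F E e B) J) :
    Function.update A e B ∈ shatteredBoxes t R F (insert e J) := by
  obtain ⟨hAJ, hA0, hbox⟩ := mem_shatteredBoxes.mp hA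
  refine mem_shatteredBoxes.mpr ⟨fun x hx ↦ ?_, fun x hx ↦ ?_, fun φ hφ ↦ ?_⟩
  · rcases eq_or_ne x e with rfl | hxe
    · simpa using mem_powersetCard.mp hB
    · simpa [hxe] using hAJ x (mem_of_mem_insert_of_ne hx hxe)
  · simp only [mem_insert, not_or] at hx
    simpa [hx.1] using hA0 x hx.2
  · let φJ : J → α := fun x ↦ φ ⟨x, mem_insert_of_mem x.2⟩
    obtain ⟨f, hf, hfφ⟩ := mem_trace.mp <| hbox φJ fun x ↦ by
      simpa [ne_of_mem_of_not_mem (hJ x.2) he] using hφ ⟨x, mem_insert_of_mem x.2⟩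
    obtain ⟨f', hf', hEf', hf'e⟩ := (mem_filter.mp hf).2 (φ ⟨e, mem_insert_self e J⟩)
      (by simpa using hφ ⟨e, mem_insert_self e J⟩)
    refine mem_trace.mpr ⟨f', hf', funext fun ⟨x, hx⟩ ↦ ?_⟩
    rcases mem_insert.mp hx with rfl | hx
    · exact hf'e
    · exact (congrFun hEf' ⟨x, hJ hx⟩).trans (congrFun hfφ ⟨x, hx⟩)

lemma sum_card_shatteredBoxes_flexible_le (he : e ∉ E) (hJ : J ⊆ E) :
    ∑ B ∈ R.powersetCard t, #(shatteredBoxes t R (flexible F E e B) J) ≤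
      #(shatteredBoxes t R F (insert e J)) := by
  rw [← card_sigma]
  refine card_le_card_of_injOn (fun q ↦ Function.update q.2 e q.1)
    (fun q hq ↦ update_mem_shatteredBoxes he hJ (mem_sigma.mp hq).1 (mem_sigma.mp hq).2) ?_
  rintro ⟨B, A⟩ hq ⟨B', A'⟩ hq' h
  have hempty {A : ι → Finset α} {G : Finset (ι → α)} (hA : A ∈ shatteredBoxes t R G J) :
      A e = ∅ :=
    (mem_shatteredBoxes.mp hA).2.1 e fun heJ ↦ he (hJ heJ)
  have hA := hempty (mem_sigma.mp hq).2
  have hA' := hempty (mem_sigma.mp hq').2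
  dsimp only at h hA hA'
  obtain rfl : B = B' := by simpa using congrFun h e
  obtain rfl : A = A' := by
    rw [← Function.update_eq_self e A, ← Function.update_eq_self e A', hA, hA',
      ← Function.update_idem (a := e) B, h, Function.update_idem]
  rfl

theorem card_trace_le_mul_sum_card_shatteredBoxes (ht : 1 ≤ t)
    (hF : ∀ f ∈ F, ∀ x ∈ E, f x ∈ R) :
    #(trace F E) ≤ t ^ #E * ∑ J ∈ E.powerset, #(shatteredBoxes t R F J) := by
  induction E using Finset.induction_on generalizing F with
  | empty => simpa using card_trace_empty_le
  | insert e E he ih =>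
    have hFE : ∀ f ∈ F, ∀ x ∈ E, f x ∈ R := fun f hf x hx ↦ hF f hf x (mem_insert_of_mem hx)
    calc #(trace F (insert e E))
        ≤ t * #(trace F E) + ∑ B ∈ R.powersetCard t, #(trace (flexible F E e B) E) :=
          card_trace_insert_le ht hF
      _ ≤ t * (t ^ #E * ∑ J ∈ E.powerset, #(shatteredBoxes t R F J)) +
          ∑ B ∈ R.powersetCard t,
            t ^ #E * ∑ J ∈ E.powerset, #(shatteredBoxes t R (flexible F E e B) J) := by
          gcongr with B
          · exact ih hFE
          · exact ih fun f hf ↦ hFE f (mem_filter.mp hf).1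
      _ = t ^ (#E + 1) * ∑ J ∈ E.powerset, #(shatteredBoxes t R F J) + t ^ #E *
          ∑ J ∈ E.powerset, ∑ B ∈ R.powersetCard t, #(shatteredBoxes t R (flexible F E e B) J) := by
          rw [← mul_sum, sum_comm, pow_succ', mul_assoc]
      _ ≤ t ^ (#E + 1) * ∑ J ∈ E.powerset, #(shatteredBoxes t R F J) +
          t ^ (#E + 1) * ∑ J ∈ E.powerset, #(shatteredBoxes t R F (insert e J)) := by
          gcongr with J hJ
          · exact Nat.le_succ _
          · exact sum_card_shatteredBoxes_flexible_le he (mem_powerset.mp hJ)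
      _ = t ^ #(insert e E) * ∑ J ∈ (insert e E).powerset, #(shatteredBoxes t R F J) := by
          rw [sum_powerset_insert he, card_insert_of_notMem he, mul_add]

/-- A box with sides of size `t` is the union of `t` disjoint transversals. -/
lemma card_shatteredBoxes_le : #(shatteredBoxes t R F J) ≤ #(trace F J) ^ t := by
  let box (φ : Fin t → J → α) (x : ι) : Finset α :=
    if hx : x ∈ J then univ.image fun i ↦ φ i ⟨x, hx⟩ else ∅
  have hsurj : shatteredBoxes t R F J ⊆ (Fintype.piFinset fun _ ↦ trace F J).image box := by
    intro A hA
    obtain ⟨hAJ, hA0, hbox⟩ := mem_shatteredBoxes.mp hA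
    let φ (i : Fin t) (x : J) : α := ((A x).equivFinOfCardEq (hAJ x x.2).2).symm i
    refine mem_image.mpr ⟨φ, Fintype.mem_piFinset.mpr fun i ↦ hbox _ fun x ↦ ?_, ?_⟩
    · exact Subtype.prop _
    · ext x v
      by_cases hx : x ∈ J
      · simp only [box, φ, dif_pos hx, mem_image, mem_univ, true_and]
        refine ⟨?_, fun hv ↦ ?_⟩
        · rintro ⟨i, rfl⟩
          exact Subtype.prop _
        · exact ⟨(A x).equivFinOfCardEq (hAJ x hx).2 ⟨v, hv⟩, by rw [Equiv.symm_apply_apply]⟩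
      · simp only [box, dif_neg hx, hA0 x hx]
  calc #(shatteredBoxes t R F J) ≤ #((Fintype.piFinset fun _ ↦ trace F J).image box) :=
        card_le_card hsurj
    _ ≤ #(Fintype.piFinset fun _ : Fin t ↦ trace F J) := card_image_le
    _ = #(trace F J) ^ t := Fintype.card_piFinset_const _ _

end Boxes

/-! ### Families shattering no set of positions -/

section OrderShattering

variable {ι : Type*} {r t n N L K Q Y Z b : ℕ} {F : Finset (ι → ℕ)} {E J : Finset ι}

/-- The functions in `F` order the positions in `T` in every possible way; the orderings of `T`
are encoded by the functions `e` that are injective on `T`. -/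
def ShattersOrders (F : Finset (ι → ℕ)) (T : Finset ι) : Prop :=
  ∀ e : ι → ℕ, Set.InjOn e T → ∃ f ∈ F, ∀ x ∈ T, ∀ y ∈ T, e x < e y → f x < f y

/-- No `r` positions are order-shattered by `F`. -/
def OrderShatterFree (r : ℕ) (F : Finset (ι → ℕ)) : Prop :=
  ∀ T : Finset ι, #T = r → ¬ ShattersOrders F T

lemma OrderShatterFree.image_div [DecidableEq (ι → ℕ)] (hF : OrderShatterFree r F) (b : ℕ) :
    OrderShatterFree r (F.image fun f x ↦ f x / b) := by
  intro T hT hsh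
  refine hF T hT fun e he ↦ ?_
  obtain ⟨_, hf', hlt⟩ := hsh e he
  obtain ⟨f, hf, rfl⟩ := mem_image.mp hf'
  exact ⟨f, hf, fun x hx y hy hxy ↦
    lt_of_not_ge fun h ↦ (hlt x hx y hy hxy).not_ge (Nat.div_le_div_right h)⟩

lemma OrderShatterFree.formationFree (hF : OrderShatterFree r F) {A : ι → Finset ℕ}
    (hA : ∀ x ∈ J, (A x).Nonempty)
    (hbox : ∀ φ : J → ℕ, (∀ x : J, φ x ∈ A x) → φ ∈ trace F J) : FormationFree r r A J := by
  classical
  rintro T hTJ hT ⟨g, hg, hgT⟩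
  refine hF T hT fun e _ ↦ ?_
  let rank (x : ι) : ℕ := #{y ∈ T | e y < e x}
  have hrank_lt {x y : ι} (hx : x ∈ T) (hxy : e x < e y) : rank x < rank y :=
    card_lt_card ⟨monotone_filter_right _ fun z _ hz ↦ hz.trans hxy,
      fun h ↦ lt_irrefl _ (mem_filter.mp (h (mem_filter.mpr ⟨hx, hxy⟩))).2⟩
  have hrank (x : ι) (hx : x ∈ T) : rank x < r :=
    hT ▸ card_lt_card (filter_ssubset.mpr ⟨x, hx, lt_irrefl _⟩)
  choose! v hvA hvg using fun x (hx : x ∈ T) ↦ hgT x hx (rank x) (hrank x hx)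
  choose! v₀ hv₀ using hA
  obtain ⟨f, hf, hfv⟩ := mem_trace.mp <| hbox (fun x ↦ if x.1 ∈ T then v x else v₀ x) fun x ↦ by
    split_ifs with hx
    · exact hvA x hx
    · exact hv₀ x x.2
  have hgf (x : ι) (hx : x ∈ T) : g (f x) = rank x := by
    rw [← hvg x hx, show f x = v x from (congrFun hfv ⟨x, hTJ hx⟩).trans (if_pos hx)]
  refine ⟨f, hf, fun x hx y hy hxy ↦ hg.reflect_lt ?_⟩
  rw [hgf x hx, hgf y hy]
  exact hrank_lt hx hxy

lemma card_trace_le_pow (hn : ∀ f ∈ F, ∀ x ∈ E, f x < n) :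
    #(trace F E) ≤ n ^ #E := by
  classical
  calc #(trace F E) ≤ #(Fintype.piFinset fun _ : E ↦ range n) := by
        refine card_le_card fun φ hφ ↦ ?_
        obtain ⟨f, hf, rfl⟩ := mem_trace.mp hφ
        exact Fintype.mem_piFinset.mpr fun x ↦ mem_range.mpr (hn f hf x x.2)
    _ = n ^ #E := by
        simp only [Fintype.card_piFinset, card_range, prod_const, card_univ, Fintype.card_coe]

lemma card_trace_le_mul_card_trace_div [DecidableEq (ι → ℕ)] (hb : 0 < b) :
    #(trace F E) ≤ b ^ #E * #(trace (F.image fun f x ↦ f x / b) E) := by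
  classical
  calc #(trace F E)
      ≤ #((Fintype.piFinset fun _ : E ↦ range b) ×ˢ trace (F.image fun f x ↦ f x / b) E) := by
        refine card_le_card_of_injOn (fun φ ↦ (fun x ↦ φ x % b, fun x ↦ φ x / b)) (fun φ hφ ↦ ?_)
          fun φ _ φ' _ h ↦ funext fun x ↦ ?_
        · obtain ⟨f, hf, rfl⟩ := mem_trace.mp hφ
          exact mem_product.mpr
            ⟨Fintype.mem_piFinset.mpr fun x ↦ mem_range.mpr (Nat.mod_lt _ hb),
              mem_trace.mpr ⟨_, mem_image_of_mem _ hf, rfl⟩⟩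
        · rw [Prod.mk.injEq] at h
          rw [← Nat.mod_add_div (φ x) b, ← Nat.mod_add_div (φ' x) b]
          rw [show φ x % b = φ' x % b from congrFun h.1 x,
            show φ x / b = φ' x / b from congrFun h.2 x]
    _ = _ := by
      simp only [card_product, Fintype.card_piFinset, card_range, prod_const, card_univ,
        Fintype.card_coe]

lemma card_trace_le_of_columnBound [Finite ι] (ht : 1 ≤ t) (hF : OrderShatterFree r F)
    (hcol : ColumnBound ι r r t N L) (hN : ∀ f ∈ F, ∀ x ∈ E, f x < N)
    (hQ : ∀ J ⊆ E, #J ≤ L * N → #(trace F J) ≤ Q) :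
    #(trace F E) ≤ t ^ #E * (2 ^ #E * Q ^ t) := by
  classical
  cases nonempty_fintype ι
  refine (card_trace_le_mul_sum_card_shatteredBoxes ht (R := range N)
    fun f hf x hx ↦ mem_range.mpr (hN f hf x hx)).trans (Nat.mul_le_mul_left _ ?_)
  rw [← card_powerset, ← smul_eq_mul]
  refine sum_le_card_nsmul _ _ _ fun J hJ ↦ ?_
  rcases (shatteredBoxes t (range N) F J).eq_empty_or_nonempty with hempty | ⟨A, hA⟩
  · rw [hempty, card_empty]
    exact zero_le
  · obtain ⟨hAJ, -, hbox⟩ := mem_shatteredBoxes.mp hA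
    have hJ_card : #J ≤ L * N := by
      have := hcol J A (range N) (card_range N).le (fun x hx ↦ ⟨(hAJ x hx).1, (hAJ x hx).2.ge⟩)
        (hF.formationFree (fun x hx ↦ card_pos.mp (by rw [(hAJ x hx).2]; exact ht)) hbox)
      rwa [card_range] at this
    exact card_shatteredBoxes_le.trans (Nat.pow_le_pow_left (hQ J (mem_powerset.mp hJ) hJ_card) t)

lemma mul_block_count_mul_le (hb : b = 2 * L * t * K) (hbn : b ≤ n) :
    K * (L * (n / b + 1) * t) ≤ n := by
  have hdiv : b * (n / b) ≤ n := Nat.mul_div_le n b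
  have : 2 * (K * (L * (n / b + 1) * t)) = 2 * L * t * K * (n / b) + 2 * L * t * K := by ring
  rw [← hb] at this
  omega

/-- Values are grouped into blocks of length `b`. The family of block indices has at most `Y ^ M`
restrictions to any `M` positions, with `M` so small compared to `n` that even the `t`-th power
of this number is at most `Z ^ n`. -/
lemma card_trace_le_pow_step [Finite ι] (ht : 1 ≤ t) (hL : 1 ≤ L) (hK : 2 ≤ K) (hZ : Y ≤ Z ^ K)
    (hZ_pos : 1 ≤ Z) (hb : b = 2 * L * t * K) (hY : Y = b * (t * (2 * Z)))
    (hF : OrderShatterFree r F) (hcol : ColumnBound ι r r t n L) (hE : #E ≤ n)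
    (hn : ∀ f ∈ F, ∀ x ∈ E, f x < n) (hbn : b ≤ n)
    (ih : ∀ m < n, ∀ (F : Finset (ι → ℕ)) (E : Finset ι), OrderShatterFree r F → #E ≤ m →
      (∀ f ∈ F, ∀ x ∈ E, f x < m) → #(trace F E) ≤ Y ^ m) :
    #(trace F E) ≤ Y ^ n := by
  classical
  have hb_pos : 0 < b := by
    rw [hb]
    positivity
  obtain ⟨N, hN⟩ : ∃ N, N = n / b + 1 := ⟨_, rfl⟩
  obtain ⟨M, hM⟩ : ∃ M, M = L * N := ⟨_, rfl⟩
  have hMn : K * (M * t) ≤ n := by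
    rw [hM, hN]
    exact mul_block_count_mul_le hb hbn
  have hNM : N ≤ M := hM ▸ Nat.le_mul_of_pos_left _ hL
  have hM_lt : M < n := by
    have : 2 * M ≤ K * (M * t) := Nat.mul_le_mul hK (Nat.le_mul_of_pos_right M ht)
    omega
  let F' := F.image fun f x ↦ f x / b
  have hF' : OrderShatterFree r F' := hF.image_div b
  have hF'N : ∀ f ∈ F', ∀ x ∈ E, f x < N := by
    intro f' hf' x hx
    obtain ⟨f, hf, rfl⟩ := mem_image.mp hf'
    exact hN ▸ Nat.lt_succ_of_le (Nat.div_le_div_right (hn f hf x hx).le)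
  have hF'J : ∀ J ⊆ E, #J ≤ L * N → #(trace F' J) ≤ Y ^ M := fun J hJE hJ ↦
    ih M hM_lt F' J hF' (hM ▸ hJ) fun f hf x hx ↦ (hF'N f hf x (hJE hx)).trans_le hNM
  have hY_pow : (Y ^ M) ^ t ≤ Z ^ n := by
    calc (Y ^ M) ^ t = Y ^ (M * t) := (pow_mul _ _ _).symm
      _ ≤ (Z ^ K) ^ (M * t) := Nat.pow_le_pow_left hZ _
      _ = Z ^ (K * (M * t)) := (pow_mul _ _ _).symm
      _ ≤ Z ^ n := Nat.pow_le_pow_right hZ_pos hMn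
  calc #(trace F E) ≤ b ^ #E * #(trace F' E) := card_trace_le_mul_card_trace_div hb_pos
    _ ≤ b ^ #E * (t ^ #E * (2 ^ #E * (Y ^ M) ^ t)) := by
      gcongr
      exact card_trace_le_of_columnBound ht hF'
        (hcol.mono le_rfl (hNM.trans hM_lt.le) le_rfl) hF'N hF'J
    _ ≤ b ^ n * (t ^ n * (2 ^ n * Z ^ n)) := by
      gcongr
      exact one_le_two
    _ = Y ^ n := by rw [hY, mul_pow, mul_pow, mul_pow]

theorem card_trace_le_pow_of_columnBound [Finite ι] (ht : 1 ≤ t) (hL : 1 ≤ L) (hK : 2 ≤ K)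
    (hZ : 4 * L * t ^ 2 * K * Z ≤ Z ^ K) (hZ_pos : 1 ≤ Z) (hF : OrderShatterFree r F)
    (hcol : ColumnBound ι r r t n L) (hE : #E ≤ n) (hn : ∀ f ∈ F, ∀ x ∈ E, f x < n) :
    #(trace F E) ≤ (4 * L * t ^ 2 * K * Z) ^ n := by
  obtain ⟨Y, hY⟩ : ∃ Y, Y = 4 * L * t ^ 2 * K * Z := ⟨_, rfl⟩
  obtain ⟨b, hb⟩ : ∃ b, b = 2 * L * t * K := ⟨_, rfl⟩
  have hYb : Y = b * (t * (2 * Z)) := by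
    rw [hY, hb]
    ring
  have hY_pos : 0 < Y := by
    rw [hY]
    positivity
  rw [← hY] at hZ ⊢
  induction n using Nat.strong_induction_on generalizing F E with
  | _ n ih =>
    rcases lt_or_ge n b with hnb | hbn
    · have hbY : b ≤ Y := hYb ▸ Nat.le_mul_of_pos_right _ (by positivity)
      calc #(trace F E) ≤ n ^ #E := card_trace_le_pow hn
        _ ≤ Y ^ #E := Nat.pow_le_pow_left (hnb.le.trans hbY) _
        _ ≤ Y ^ n := Nat.pow_le_pow_right hY_pos hE
    · exact card_trace_le_pow_step ht hL hK hZ hZ_pos hb hYb hF hcol hE hn hbn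
        fun m hm F E hF ↦ ih m hm hF (hcol.mono le_rfl hm.le le_rfl)

end OrderShattering

/-! ### Permutations of bounded VC-dimension -/

section Permutations

variable {n k : ℕ} {P : Finset (Equiv.Perm (Fin n))}

/-- The permutations in `P`, regarded as `ℕ`-valued functions. -/
def permValues (P : Finset (Equiv.Perm (Fin n))) : Finset (Fin n → ℕ) :=
  P.image fun π x ↦ (π x : ℕ)

lemma lt_of_mem_permValues {f : Fin n → ℕ} (hf : f ∈ permValues P) (x : Fin n) : f x < n := by
  obtain ⟨π, -, rfl⟩ := mem_image.mp hf
  exact (π x).isLt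

lemma card_eq_card_trace_permValues : #P = #(trace (permValues P) univ) := by
  rw [trace, permValues, image_image, card_image_of_injective]
  intro π ρ h
  ext x
  exact congrFun h ⟨x, mem_univ x⟩

lemma orderShatterFree_permValues (hP : VCDimLE n k P) :
    OrderShatterFree (k + 1) (permValues P) := by
  intro T hT hsh
  let a : Fin (k + 1) ↪o Fin n := T.orderEmbOfFin hT
  refine hP a ⟨a.strictMono, fun σ ↦ ?_⟩
  let e : Fin n → ℕ := Function.extend a (fun i ↦ (σ i : ℕ)) 0
  have he (i : Fin (k + 1)) : e (a i) = σ i := a.injective.extend_apply _ _ i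
  have he_inj : Set.InjOn e T := by
    rw [← T.range_orderEmbOfFin hT]
    rintro _ ⟨i, rfl⟩ _ ⟨j, rfl⟩ hij
    exact congrArg a (σ.injective (Fin.ext (by rwa [← he, ← he])))
  obtain ⟨f, hf, hlt⟩ := hsh e he_inj
  obtain ⟨π, hπ, rfl⟩ := mem_image.mp hf
  have hmono : StrictMono fun i ↦ π (a (σ.symm i)) := fun i j hij ↦
    hlt (a _) (T.orderEmbOfFin_mem hT _) (a _) (T.orderEmbOfFin_mem hT _) <| by
      simpa only [he, Equiv.apply_symm_apply, Fin.val_fin_lt] using hij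
  refine ⟨π, hπ, fun i j ↦ ?_⟩
  simpa only [Equiv.symm_apply_apply] using (hmono.lt_iff_lt (a := σ i) (b := σ j)).symm

end Permutations

/-! ### The bound for VC-dimension four -/

lemma mul_two_pow_sq_mul_le_pow {a : ℕ} (ha : 1 ≤ a) (L : ℕ) :
    4 * L * (10 * 2 ^ a) ^ 2 * (a + 1) * (3200 * L) ≤ (3200 * L) ^ (a + 1) := by
  have h8 : (8 ^ a : ℕ) = (2 ^ a) ^ 2 * 2 ^ a := by
    rw [← pow_succ, pow_right_comm]
    norm_num
  rw [pow_succ]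
  refine Nat.mul_le_mul_right _ ?_
  calc 4 * L * (10 * 2 ^ a) ^ 2 * (a + 1) = 400 * L * ((2 ^ a) ^ 2 * (a + 1)) := by ring
    _ ≤ 400 * L * 8 ^ a := by
      rw [h8]
      gcongr
      exact Nat.lt_two_pow_self
    _ ≤ (400 * L) ^ a * 8 ^ a := by
      gcongr
      exact Nat.le_self_pow (by omega) _
    _ = (3200 * L) ^ a := by
      rw [← mul_pow]
      congr 1
      ring

lemma card_trace_le_of_columnBound_two_pow {ι : Type*} [Finite ι] {r n a L : ℕ}
    {F : Finset (ι → ℕ)} {E : Finset ι} (ha : 1 ≤ a) (hL : 1 ≤ L) (hF : OrderShatterFree r F)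
    (hcol : ColumnBound ι r r (10 * 2 ^ a) n L) (hE : #E ≤ n) (hn : ∀ f ∈ F, ∀ x ∈ E, f x < n) :
    #(trace F E) ≤ (800 * L * (3200 * L) * (a * 4 ^ a)) ^ n := by
  refine (card_trace_le_pow_of_columnBound (Nat.mul_pos (by norm_num) (by positivity)) hL (by omega)
    (mul_two_pow_sq_mul_le_pow ha L) (by omega) hF hcol hE hn).trans (Nat.pow_le_pow_left ?_ n)
  have h4 : (4 ^ a : ℕ) = (2 ^ a) ^ 2 := by
    rw [pow_right_comm]
    norm_num
  calc 4 * L * (10 * 2 ^ a) ^ 2 * (a + 1) * (3200 * L)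
      = 400 * L * (3200 * L) * ((a + 1) * 4 ^ a) := by
        rw [h4]
        ring
    _ ≤ 400 * L * (3200 * L) * (2 * a * 4 ^ a) := by
        gcongr
        omega
    _ = 800 * L * (3200 * L) * (a * 4 ^ a) := by ring

lemma columnBound_invAck (ι : Type*) (n : ℕ) :
    ColumnBound ι 5 5 (10 * 2 ^ invAck n) n 102400 := by
  obtain ⟨d, hd⟩ : ∃ d, invAck n = d + 1 := Nat.exists_eq_add_of_le' (invAck_spec n).1
  have hn : n ≤ threshold d 3 := by simpa only [hd, Nat.add_sub_cancel] using le_threshold_invAck n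
  refine (columnBound_five d 3).mono ?_ hn (by norm_num)
  have := fiveWeight_add d
  rw [hd, pow_succ]
  omega

theorem exists_card_le_pow_of_vcDimLE_four :
    ∃ c : ℕ, 0 < c ∧ ∀ (n : ℕ) (P : Finset (Equiv.Perm (Fin n))), VCDimLE n 4 P →
      #P ≤ (c * (invAck n * 4 ^ invAck n)) ^ n := by
  refine ⟨800 * 102400 * (3200 * 102400), by norm_num, fun n P hP ↦ ?_⟩
  rw [card_eq_card_trace_permValues]
  exact card_trace_le_of_columnBound_two_pow (invAck_spec n).1 (by norm_num)
    (orderShatterFree_permValues hP) (columnBound_invAck (Fin n) n) (card_fin n).le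
    fun f hf x _ ↦ lt_of_mem_permValues hf x

end PermVC

theorem r4_upper_bound_general :
    ∃ C : ℝ, ∀ n : ℕ, ∀ P : Finset (Equiv.Perm (Fin n)), VCDimLE n 4 P →
      (P.card : ℝ) ≤
        (2 : ℝ) ^ ((n : ℝ) * (2 * (invAck n : ℝ) + Real.logb 2 (invAck n) + C)) := by
  obtain ⟨c, hc, hcard⟩ := PermVC.exists_card_le_pow_of_vcDimLE_four
  refine ⟨Real.logb 2 c, fun n P hP ↦ ?_⟩
  have ha : (0 : ℝ) < invAck n := by exact_mod_cast (PermVC.invAck_spec n).1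
  have hc' : (0 : ℝ) < c := by exact_mod_cast hc
  have h4 : (2 : ℝ) ^ (2 * (invAck n : ℝ)) = 4 ^ invAck n := by
    rw [Real.rpow_mul zero_le_two, Real.rpow_natCast]
    norm_num
  calc (P.card : ℝ) ≤ (c * (invAck n * 4 ^ invAck n)) ^ n := by exact_mod_cast hcard n P hP
    _ = ((2 : ℝ) ^ (2 * (invAck n : ℝ) + Real.logb 2 (invAck n) + Real.logb 2 c)) ^ n := by
      rw [Real.rpow_add two_pos, Real.rpow_add two_pos, h4,
        Real.rpow_logb two_pos (by norm_num) ha, Real.rpow_logb two_pos (by norm_num) hc']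
      ring
    _ = _ := by rw [← Real.rpow_mul_natCast zero_le_two, mul_comm]

/-- There is a constant `C` such that for every `n ≥ 1`, every family of
`n`-permutations with VC-dimension at most 4 has size at most
`2 ^ (n·(2α(n) + 3 log₂ α(n) + C))`. -/
theorem r4_upper_bound :
    ∃ C : ℝ, ∀ n : ℕ, 1 ≤ n →
      ∀ P : Finset (Equiv.Perm (Fin n)), VCDimLE n 4 P →
        (P.card : ℝ) ≤
          (2 : ℝ) ^ ((n : ℝ) * (2 * (invAck n : ℝ) + 3 * Real.logb 2 (invAck n) + C)) := by
  obtain ⟨C, hC⟩ := r4_upper_bound_general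
  refine ⟨C, fun n _ P hP ↦ (hC n P hP).trans ?_⟩
  have hlog : 0 ≤ Real.logb 2 (invAck n) :=
    Real.logb_nonneg one_lt_two (by exact_mod_cast (PermVC.invAck_spec n).1)
  gcongr
  · exact one_le_two
  · linarith
end
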